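/- arXiv:1105.0632 — 8 statements merged into one kernel-verified Lean document; each statement's English description precedes it below -/
import Mathlib

section
/- Let D be a nonempty Borel subset of ℝ^d and, for k ∈ ℕ, let 𝒰_k = {u ∈ ℂ^d : sup_{x∈D} Re⟨u,x⟩ ≤ k}. Let (μ_t)_{t≥0} be a family of Borel probability measures on ℝ^d, each giving full mass to D, such that t ↦ μ_t is weakly continuous (i.e. for every bounded continuous function g : ℝ^d → ℝ, the map t ↦ ∫ g dμ_t is continuous on [0,∞)). Then for every k ∈ ℕ the map (t,u) ↦ ∫_D e^{⟨u,ξ⟩} dμ_t(ξ) is jointly continuous on [0,∞) × 𝒰_k. -/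
/-!
The bound `|exp ⟨u, ξ⟩| ≤ e ^ k` is available for `u ∈ 𝒰_k` and `ξ ∈ D` only. Capping the real
part of the exponent at `k` gives a function `F` of `(u, ξ)` which is bounded and continuous on the
whole of `ℂ^d × ℝ^d` and agrees with the integrand on `𝒰_k × D`. As `μ_t` is carried by `D`, the
transform at `(t, u)` equals `∫ F (u, ξ) dμ_t(ξ)`, the integral of `F` against the product
measure `δ_u ⊗ μ_t`. The map `(u, t) ↦ δ_u ⊗ μ_t` is weakly continuous, because `u ↦ δ_u` is and
because the product of Borel probability measures is jointly weakly continuous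
(`ProbabilityMeasure.continuous_prod`); testing it against `F` gives the claim.
-/

open MeasureTheory Filter Topology

noncomputable section

/-- The bilinear (not sesquilinear) pairing `⟨u,x⟩ = ∑ i, u i * x i` between a complex
vector `u ∈ ℂ^d` and a real vector `x ∈ ℝ^d`. -/
def pair {d : ℕ} (u : EuclideanSpace ℂ (Fin d)) (x : EuclideanSpace ℝ (Fin d)) : ℂ :=
  ∑ i, u i * (x i : ℂ)

/-- The bounded continuous function `(u, ξ) ↦ exp (min (Re ⟨u, ξ⟩) k + i Im ⟨u, ξ⟩)`
on `ℂ^d × ℝ^d`. -/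
def cappedExp (d k : ℕ) :
    BoundedContinuousFunction (EuclideanSpace ℂ (Fin d) × EuclideanSpace ℝ (Fin d)) ℂ :=
  BoundedContinuousFunction.ofNormedAddCommGroup
    (fun p => Complex.exp (((min (pair p.1 p.2).re (k : ℝ) : ℝ) : ℂ)
      + ((pair p.1 p.2).im : ℂ) * Complex.I))
    (by unfold pair; fun_prop) (Real.exp k)
    (fun p => by simp [Complex.norm_exp])

lemma cappedExp_eq {d k : ℕ} {u : EuclideanSpace ℂ (Fin d)} {ξ : EuclideanSpace ℝ (Fin d)}
    (h : (pair u ξ).re ≤ (k : ℝ)) : cappedExp d k (u, ξ) = Complex.exp (pair u ξ) := by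
  simp [cappedExp, min_eq_left h, Complex.re_add_im]

/-- If `(μ_t)_{t ≥ 0}` is a weakly continuous family of Borel probability
measures on `ℝ^d`, each giving full mass to a nonempty Borel set `D`, then for every
`k ∈ ℕ` the map `(t,u) ↦ ∫_D e^{⟨u,ξ⟩} dμ_t(ξ)` is jointly continuous on
`[0,∞) × 𝒰_k`, where `𝒰_k = {u ∈ ℂ^d : sup_{x ∈ D} Re⟨u,x⟩ ≤ k}`. -/
theorem jointly_continuous_fourierLaplace
    (d : ℕ) (D : Set (EuclideanSpace ℝ (Fin d)))
    (hDne : D.Nonempty) (hDmeas : MeasurableSet D)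
    (μ : ℝ → Measure (EuclideanSpace ℝ (Fin d)))
    (hprob : ∀ t : ℝ, 0 ≤ t → IsProbabilityMeasure (μ t))
    (hfull : ∀ t : ℝ, 0 ≤ t → μ t D = 1)
    (hweak : ∀ g : BoundedContinuousFunction (EuclideanSpace ℝ (Fin d)) ℝ,
      ContinuousOn (fun t : ℝ => ∫ ξ, g ξ ∂(μ t)) (Set.Ici (0:ℝ)))
    (k : ℕ) :
    ContinuousOn
      (fun p : ℝ × EuclideanSpace ℂ (Fin d) => ∫ ξ in D, Complex.exp (pair p.2 ξ) ∂(μ p.1))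
      (Set.Ici (0:ℝ) ×ˢ {u : EuclideanSpace ℂ (Fin d) | ∀ x ∈ D, (pair u x).re ≤ (k:ℝ)}) := by
  let P : Set.Ici (0:ℝ) → ProbabilityMeasure (EuclideanSpace ℝ (Fin d)) :=
    fun t => ⟨μ t, hprob t t.2⟩
  have hP : Continuous P := by
    refine continuous_iff_continuousAt.2 fun t => ?_
    refine ProbabilityMeasure.tendsto_iff_forall_integral_tendsto.2 fun g => ?_
    exact (hweak g).domRestrict.tendsto t
  have hQ : Continuous fun p : Set.Ici (0:ℝ) × EuclideanSpace ℂ (Fin d) =>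
      (diracProba p.2).prod (P p.1) :=
    ProbabilityMeasure.continuous_prod.comp
      ((continuous_diracProba.comp continuous_snd).prodMk (hP.comp continuous_fst))
  have hF : Continuous fun p : Set.Ici (0:ℝ) × EuclideanSpace ℂ (Fin d) =>
      ∫ ξ, cappedExp d k (p.2, ξ) ∂(μ p.1) := by
    refine continuous_iff_continuousAt.2 fun p => ?_
    have h := (ProbabilityMeasure.tendsto_iff_forall_integral_rclike_tendsto ℂ).1
      (hQ.tendsto p) (cappedExp d k)
    have key : ∀ q : Set.Ici (0:ℝ) × EuclideanSpace ℂ (Fin d),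
        ∫ x, cappedExp d k x ∂((diracProba q.2).prod (P q.1) : Measure _)
          = ∫ ξ, cappedExp d k (q.2, ξ) ∂(μ q.1) := by
      intro q
      have := hprob q.1 q.1.2
      change ∫ x, cappedExp d k x ∂((Measure.dirac q.2).prod (μ q.1)) = _
      rw [Measure.dirac_prod, integral_map (by fun_prop)
        (cappedExp d k).continuous.aestronglyMeasurable]
    simpa only [key, ContinuousAt] using h
  rw [continuousOn_iff_continuous_domRestrict]
  have hι : Continuous fun p : (Set.Ici (0:ℝ) ×ˢ
      {u : EuclideanSpace ℂ (Fin d) | ∀ x ∈ D, (pair u x).re ≤ (k:ℝ)} :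
        Set (ℝ × EuclideanSpace ℂ (Fin d))) =>
      ((⟨p.1.1, p.2.1⟩, p.1.2) : Set.Ici (0:ℝ) × EuclideanSpace ℂ (Fin d)) := by
    fun_prop
  convert hF.comp hι using 1
  ext ⟨⟨t, u⟩, ht, hu⟩
  have := hprob t ht
  have hae : ∀ᵐ ξ ∂(μ t), ξ ∈ D := (prob_compl_eq_zero_iff hDmeas).2 (hfull t ht)
  change ∫ ξ in D, Complex.exp (pair u ξ) ∂(μ t) = ∫ ξ, cappedExp d k (u, ξ) ∂(μ t)
  rw [Measure.restrict_eq_self_of_ae_mem hae]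
  refine integral_congr_ae ?_
  filter_upwards [hae] with ξ hξ
  exact (cappedExp_eq (hu ξ hξ)).symm
end
end

section
/- Let D be a nonempty Borel subset of ℝ^d, 𝒰 = {u ∈ ℂ^d : sup_{x∈D} Re⟨u,x⟩ < ∞}, and let (μ_t)_{t≥0} be a weakly continuous family of Borel probability measures on ℝ^d, each giving full mass to D, with μ_0 = δ_x the Dirac measure at some x ∈ D. Then for every u ∈ 𝒰 the 'lifetime' σ(u) := inf{t ≥ 0 : ∫_D e^{⟨u,ξ⟩} dμ_t(ξ) = 0} is strictly positive (with inf ∅ = +∞). -/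
/-!
Since `x ∈ D`, the normalised exponential `h ξ = exp (⟨u,ξ⟩ - ⟨u,x⟩)` satisfies `h x = 1`, and
`‖h‖ ≤ B := exp (C - Re ⟨u,x⟩)` on `D`. Clamping `Re h` to `[-B, B]` gives a bounded continuous
function `g` on the whole space that agrees with `Re h` on `D`. Weak continuity makes
`t ↦ ∫ g dμ_t` continuous on `[0, ∞)` with value `1` at `t = 0`, so it is positive on some
`[0, ε)`. As `μ_t` is carried by `D`, this integral equals `Re (exp (-⟨u,x⟩) ∫_D exp ⟨u,ξ⟩ dμ_t)`,
hence the Fourier–Laplace transform cannot vanish on `[0, ε)`.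
-/

open MeasureTheory Filter Topology

noncomputable section

lemma continuous_pair {d : ℕ} (u : EuclideanSpace ℂ (Fin d)) : Continuous (pair u) := by
  unfold pair
  fun_prop

/-- For a weakly continuous family `(μ_t)_{t≥0}` of Borel probability
measures on `ℝ^d`, each carried by the nonempty Borel set `D`, with `μ_0 = δ_x` for some
`x ∈ D`, and for every `u ∈ 𝒰 = {u : sup_{x∈D} Re⟨u,x⟩ < ∞}`, the lifetime
`σ(u) = inf{t ≥ 0 : ∫_D e^{⟨u,ξ⟩} dμ_t = 0}` is strictly positive (with `inf ∅ = +∞`);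
equivalently, there is `ε > 0` bounding from below every `t ≥ 0` at which the
Fourier–Laplace transform vanishes. -/
theorem lifetime_pos
    (d : ℕ) (D : Set (EuclideanSpace ℝ (Fin d)))
    (hDne : D.Nonempty) (hDmeas : MeasurableSet D)
    (μ : ℝ → Measure (EuclideanSpace ℝ (Fin d)))
    (hprob : ∀ t : ℝ, 0 ≤ t → IsProbabilityMeasure (μ t))
    (hfull : ∀ t : ℝ, 0 ≤ t → μ t D = 1)
    (hweak : ∀ g : BoundedContinuousFunction (EuclideanSpace ℝ (Fin d)) ℝ,
      ContinuousOn (fun t : ℝ => ∫ ξ, g ξ ∂(μ t)) (Set.Ici (0:ℝ)))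
    (x : EuclideanSpace ℝ (Fin d)) (hx : x ∈ D)
    (h0 : μ 0 = Measure.dirac x)
    (u : EuclideanSpace ℂ (Fin d)) (hu : ∃ C : ℝ, ∀ y ∈ D, (pair u y).re ≤ C) :
    ∃ ε > (0:ℝ), ∀ t : ℝ, 0 ≤ t → (∫ ξ in D, Complex.exp (pair u ξ) ∂(μ t)) = 0 → ε ≤ t := by
  obtain ⟨C, hC⟩ := hu
  set B : ℝ := Real.exp (C - (pair u x).re) with hB
  have hBpos : 0 < B := Real.exp_pos _
  have hB1 : 1 ≤ B := Real.one_le_exp (sub_nonneg.2 (hC x hx))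
  let h : EuclideanSpace ℝ (Fin d) → ℂ := fun ξ =>
    Complex.exp (-pair u x) * Complex.exp (pair u ξ)
  have hcont : Continuous h :=
    continuous_const.mul (Complex.continuous_exp.comp (continuous_pair u))
  have hbound : ∀ ξ ∈ D, ‖h ξ‖ ≤ B := by
    intro ξ hξ
    have := hC ξ hξ
    simp only [h, norm_mul, Complex.norm_exp, ← Real.exp_add, hB, Complex.neg_re]
    exact Real.exp_le_exp.2 (by linarith)
  let g : BoundedContinuousFunction (EuclideanSpace ℝ (Fin d)) ℝ :=
    BoundedContinuousFunction.ofNormedAddCommGroup (fun ξ => max (-B) (min B (h ξ).re))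
      (continuous_const.max (continuous_const.min (Complex.continuous_re.comp hcont))) B
      (fun ξ => abs_le.2 ⟨le_max_left _ _, max_le (by linarith) (min_le_left _ _)⟩)
  have hg : ∀ ξ ∈ D, g ξ = (h ξ).re := by
    intro ξ hξ
    have h1 := abs_le.1 ((Complex.abs_re_le_norm (h ξ)).trans (hbound ξ hξ))
    change max (-B) (min B (h ξ).re) = _
    rw [min_eq_right h1.2, max_eq_right h1.1]
  have hg0 : ∫ ξ, g ξ ∂(μ 0) = 1 := by
    rw [h0, integral_dirac, hg x hx]
    simp [h, ← Complex.exp_add]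
  have hev : ∀ᶠ t in 𝓝[Set.Ici 0] (0 : ℝ), 0 < ∫ ξ, g ξ ∂(μ t) :=
    (hweak g 0 Set.self_mem_Ici).eventually (lt_mem_nhds (by simp only [hg0]; exact one_pos))
  obtain ⟨ε, hε, hball⟩ := Metric.mem_nhdsWithin_iff.1 hev
  refine ⟨ε, hε, fun t ht hzero => ?_⟩
  by_contra! hlt
  have hpos : 0 < ∫ ξ, g ξ ∂(μ t) :=
    hball ⟨by rwa [Metric.mem_ball, Real.dist_eq, sub_zero, abs_of_nonneg ht], ht⟩
  have := hprob t ht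
  have hae : ∀ᵐ ξ ∂(μ t), ξ ∈ D := (mem_ae_iff_prob_eq_one hDmeas).2 (hfull t ht)
  have hint : Integrable h (μ t) :=
    Integrable.of_bound hcont.aestronglyMeasurable B (hae.mono hbound)
  have hh : ∫ ξ, h ξ ∂(μ t) = 0 := by
    rw [← Measure.restrict_eq_self_of_ae_mem hae]
    simp only [h]
    rw [integral_const_mul, hzero, mul_zero]
  have hre : ∫ ξ, g ξ ∂(μ t) = 0 := by
    rw [integral_congr_ae (hae.mono hg)]
    have := integral_re hint
    rw [hh] at this
    simpa using this
  exact hpos.ne' hre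
end
end

section
/- Let Q ⊆ ℝ × ℂ^d be a set admitting an exhaustion Q = ⋃_{n∈ℕ} K_n by sets K_n ⊆ K_{n+1}, where each K_n is compact, contractible (as a topological space with the subspace topology), and contains a common base point q₀. Let f : Q → ℂ ∖ {0} be a function whose restriction to each K_n is continuous and with f(q₀) = 1. Then there exists a unique function g : Q → ℂ such that the restriction of g to each K_n is continuous, g(q₀) = 0, and f(q) = e^{g(q)} for all q ∈ Q. -/
/-!
The map `exp : ℂ → ℂ ∖ {0}` is a covering map, so it has the homotopy lifting property over
arbitrary spaces. A contraction of a space `X` makes any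
`F : X → ℂ ∖ {0}` homotopic to a constant; a
constant map has a logarithm, and lifting the homotopy from there gives one for `F`
(`exists_log_of_contractible`). The criterion for lifting maps from simply connected spaces would
not suffice, as it requires local path connectedness, which a contractible set may lack.

Logarithms of the same function on a connected set agree as soon as they agree at one point
(`eqOn_of_exp_eqOn`). Hence the normalised logarithms on the sets `K n` are compatible and glue to
a function on their union, and the same fact gives uniqueness.
-/

open MeasureTheory Filter Topology

theorem exists_log_of_contractible {X : Type*} [TopologicalSpace X] [ContractibleSpace X]
    (F : C(X, {z : ℂ // z ≠ 0})) : ∃ G : C(X, ℂ), ∀ x, Complex.exp (G x) = F x := by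
  obtain ⟨p, ⟨h⟩⟩ := id_nullhomotopic X
  -- `H` runs from the constant `F p` to `F`, so that the known lift sits at time `0`.
  let H : C(unitInterval × X, {z : ℂ // z ≠ 0}) := F.comp h.symm.toContinuousMap
  have H_zero : ∀ x, H (0, x) =
      (⟨_, Complex.exp_ne_zero (ContinuousMap.const X (Complex.log (F p)) x)⟩ :
        {z : ℂ // z ≠ 0}) := by
    intro x
    have h0 : h.symm.toContinuousMap (0, x) = p := h.symm.apply_zero x
    apply Subtype.ext
    simp [H, h0, Complex.exp_log (F p).2]
  have cov := Complex.isCoveringMap_exp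
  refine ⟨(cov.liftHomotopy H _ H_zero).comp ((ContinuousMap.const X 1).prodMk (.id X)), ?_⟩
  intro x
  have h1 : h.symm.toContinuousMap (1, x) = x := h.symm.apply_one x
  have hl := congrArg Subtype.val (congrFun (cov.liftHomotopy_lifts H _ H_zero) (1, x))
  have h2 : H (1, x) = F x := congrArg F h1
  rw [h2] at hl
  exact hl

/-- Normalised version on a subset: since `f q₀ = 1`, subtracting the value at `q₀` of any
logarithm of `f` again gives a logarithm of `f`. -/
theorem exists_log_on {E : Type*} [TopologicalSpace E] {S : Set E} (hS : ContractibleSpace S)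
    {q₀ : E} (hq₀ : q₀ ∈ S) {f : E → ℂ} (hf : ContinuousOn f S) (hf0 : ∀ q ∈ S, f q ≠ 0)
    (hf1 : f q₀ = 1) :
    ∃ g : E → ℂ, ContinuousOn g S ∧ g q₀ = 0 ∧ ∀ q ∈ S, Complex.exp (g q) = f q := by
  obtain ⟨G, hG⟩ := exists_log_of_contractible (X := S)
    ⟨fun x => ⟨f x, hf0 x x.2⟩, (continuousOn_iff_continuous_domRestrict.1 hf).subtype_mk _⟩
  let g : E → ℂ := Function.extend Subtype.val (fun x => G x - G ⟨q₀, hq₀⟩) 0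
  have hg : ∀ x : S, g x = G x - G ⟨q₀, hq₀⟩ :=
    fun x => Subtype.val_injective.extend_apply _ _ x
  refine ⟨g, ?_, ?_, ?_⟩
  · rw [continuousOn_iff_continuous_domRestrict]
    exact (G.continuous.sub continuous_const).congr fun x => (hg x).symm
  · simpa using hg ⟨q₀, hq₀⟩
  · intro q hq
    have h1 := hg ⟨q, hq⟩
    have h2 : Complex.exp (G ⟨q, hq⟩) = f q := hG ⟨q, hq⟩
    have h3 : Complex.exp (G ⟨q₀, hq₀⟩) = f q₀ := hG ⟨q₀, hq₀⟩
    simp only at h1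
    rw [h1, Complex.exp_sub, h2, h3, hf1, div_one]

/-- Uniqueness of lifts along the covering map `exp`. -/
theorem eqOn_of_exp_eqOn {E : Type*} [TopologicalSpace E] {S : Set E} (hS : IsPreconnected S)
    {g g' : E → ℂ} (hg : ContinuousOn g S) (hg' : ContinuousOn g' S)
    (he : ∀ q ∈ S, Complex.exp (g q) = Complex.exp (g' q)) {q₀ : E} (hq₀ : q₀ ∈ S)
    (h₀ : g q₀ = g' q₀) : Set.EqOn g g' S :=
  Complex.isCoveringMap_exp.eqOn_of_comp_eqOn hS hg hg'
    (fun q hq => Subtype.ext (he q hq)) hq₀ h₀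

/-- Existence and uniqueness of a continuous logarithm on a set
`Q ⊆ ℝ × ℂ^d` exhausted by an increasing sequence of compact contractible sets `K n`
containing a common base point `q₀`. If `f` is nonvanishing on `Q`, continuous on each
`K n` and `f q₀ = 1`, then there is a unique `g` with `g` continuous on each `K n`,
`g q₀ = 0` and `f = exp g` on `Q`. -/
theorem exists_unique_continuous_log
    (d : ℕ) (Q : Set (ℝ × EuclideanSpace ℂ (Fin d)))
    (K : ℕ → Set (ℝ × EuclideanSpace ℂ (Fin d)))
    (hmono : ∀ n, K n ⊆ K (n + 1))
    (hunion : Q = ⋃ n, K n)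
    (hcpt : ∀ n, IsCompact (K n))
    (hcontr : ∀ n, ContractibleSpace ↥(K n))
    (q₀ : ℝ × EuclideanSpace ℂ (Fin d)) (hq₀ : ∀ n, q₀ ∈ K n)
    (f : ℝ × EuclideanSpace ℂ (Fin d) → ℂ)
    (hf0 : ∀ q ∈ Q, f q ≠ 0)
    (hfc : ∀ n, ContinuousOn f (K n))
    (hf1 : f q₀ = 1) :
    ∃ g : ℝ × EuclideanSpace ℂ (Fin d) → ℂ,
      (∀ n, ContinuousOn g (K n)) ∧ g q₀ = 0 ∧
      (∀ q ∈ Q, f q = Complex.exp (g q)) ∧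
      (∀ g' : ℝ × EuclideanSpace ℂ (Fin d) → ℂ,
        (∀ n, ContinuousOn g' (K n)) → g' q₀ = 0 →
        (∀ q ∈ Q, f q = Complex.exp (g' q)) → ∀ q ∈ Q, g' q = g q) := by
  have hKmono : Monotone K := monotone_nat_of_le_succ hmono
  have hKQ : ∀ n, K n ⊆ Q := fun n => hunion ▸ Set.subset_iUnion K n
  have hconn : ∀ n, IsPreconnected (K n) := fun n => by
    have := hcontr n
    exact isPreconnected_iff_preconnectedSpace.2 inferInstance
  choose G hGc hG0 hGe using fun n =>
    exists_log_on (hcontr n) (hq₀ n) (hfc n) (fun q hq => hf0 q (hKQ n hq)) hf1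
  have hcompat : ∀ m n, m ≤ n → Set.EqOn (G m) (G n) (K m) := fun m n hmn =>
    eqOn_of_exp_eqOn (hconn m) (hGc m) ((hGc n).mono (hKmono hmn))
      (fun q hq => (hGe m q hq).trans (hGe n q (hKmono hmn hq)).symm) (hq₀ m)
      ((hG0 m).trans (hG0 n).symm)
  classical
  let g : ℝ × EuclideanSpace ℂ (Fin d) → ℂ :=
    fun q => if h : ∃ n, q ∈ K n then G (Nat.find h) q else 0
  have hg : ∀ n, Set.EqOn g (G n) (K n) := by
    intro n q hq
    have h : ∃ n, q ∈ K n := ⟨n, hq⟩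
    simp only [g, dif_pos h]
    exact hcompat _ _ (Nat.find_min' h hq) (Nat.find_spec h)
  have hgc : ∀ n, ContinuousOn g (K n) := fun n => (hGc n).congr (hg n)
  have hg0 : g q₀ = 0 := (hg 0 (hq₀ 0)).trans (hG0 0)
  have hge : ∀ q ∈ Q, f q = Complex.exp (g q) := by
    intro q hq
    obtain ⟨n, hn⟩ := Set.mem_iUnion.1 (hunion ▸ hq)
    rw [hg n hn, hGe n q hn]
  refine ⟨g, hgc, hg0, hge, fun g' hg'c hg'0 hg'e q hq => ?_⟩
  obtain ⟨n, hn⟩ := Set.mem_iUnion.1 (hunion ▸ hq)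
  exact eqOn_of_exp_eqOn (hconn n) (hg'c n) (hgc n)
    (fun x hx => (hg'e x (hKQ n hx)).symm.trans (hge x (hKQ n hx))) (hq₀ n)
    (hg'0.trans hg0.symm) hn
end

section
/- Let D be a nonempty Borel subset of ℝ^d, 𝒰 = {u ∈ ℂ^d : sup_{x∈D} Re⟨u,x⟩ < ∞}, and let u ∈ 𝒰. For each x ∈ D let μ_x be a Borel probability measure on ℝ^d giving full mass to D. Suppose there exist Φ ∈ ℂ with Φ ≠ 0 and v ∈ ℂ^d such that ∫_D e^{⟨u,ξ⟩} dμ_x(ξ) = Φ · e^{⟨x,v⟩} for all x ∈ D. Then v ∈ 𝒰, i.e. sup_{x∈D} Re⟨x,v⟩ < ∞. -/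
/-!
If `C` bounds `Re ⟨u,ξ⟩` on `D`, then `|e^{⟨u,ξ⟩}| = e^{Re ⟨u,ξ⟩} ≤ e^C` on `D`, so integrating
against the probability measure `μ_x` gives `|Φ| e^{Re ⟨v,x⟩} ≤ e^C` for every `x ∈ D`. As `Φ ≠ 0`,
taking logarithms yields the uniform bound `Re ⟨v,x⟩ ≤ C - log |Φ|`.
-/

open MeasureTheory Filter Topology

noncomputable section

/-- If for each `x ∈ D` the Fourier–Laplace transform at `u ∈ 𝒰` of a
probability measure `μ_x` carried by `D` equals `Φ · e^{⟨x,v⟩}` with `Φ ≠ 0`, then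
`v ∈ 𝒰`, i.e. `sup_{x∈D} Re⟨x,v⟩ < ∞`. -/
theorem psi_maps_into_U
    (d : ℕ) (D : Set (EuclideanSpace ℝ (Fin d)))
    (hDne : D.Nonempty) (hDmeas : MeasurableSet D)
    (u : EuclideanSpace ℂ (Fin d)) (hu : ∃ C : ℝ, ∀ x ∈ D, (pair u x).re ≤ C)
    (μ : EuclideanSpace ℝ (Fin d) → Measure (EuclideanSpace ℝ (Fin d)))
    (hprob : ∀ x ∈ D, IsProbabilityMeasure (μ x))
    (hfull : ∀ x ∈ D, μ x D = 1)
    (Φ : ℂ) (hΦ : Φ ≠ 0) (v : EuclideanSpace ℂ (Fin d))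
    (haffine : ∀ x ∈ D, (∫ ξ in D, Complex.exp (pair u ξ) ∂(μ x)) = Φ * Complex.exp (pair v x)) :
    ∃ C : ℝ, ∀ x ∈ D, (pair v x).re ≤ C := by
  obtain ⟨C, hC⟩ := hu
  refine ⟨C - Real.log ‖Φ‖, fun x hx => ?_⟩
  have hbound : ‖∫ ξ in D, Complex.exp (pair u ξ) ∂(μ x)‖ ≤ Real.exp C * (μ x).real D :=
    norm_setIntegral_le_of_norm_le_const (by simp [hfull x hx]) fun ξ hξ => by
      rw [Complex.norm_exp]
      exact Real.exp_le_exp.mpr (hC ξ hξ)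
  rw [haffine x hx, norm_mul, Complex.norm_exp, measureReal_def, hfull x hx,
    ENNReal.toReal_one, mul_one, ← Real.exp_log (norm_pos_iff.mpr hΦ), ← Real.exp_add,
    Real.exp_le_exp] at hbound
  linarith
end
end

section
/- Let D be a nonempty Borel subset of ℝ^d and 𝒰 = {u ∈ ℂ^d : sup_{x∈D} Re⟨u,x⟩ < ∞}. Let (p_t)_{t≥0} be a family of probability kernels from D to D satisfying the Chapman–Kolmogorov equation p_{t+s}(x,A) = ∫_D p_t(y,A) p_s(x,dy) for all s,t ≥ 0, x ∈ D and Borel A ⊆ D. Suppose there are functions φ : [0,∞) × 𝒰 → ℂ and ψ : [0,∞) × 𝒰 → 𝒰 such that ∫_D e^{⟨u,ξ⟩} p_t(x,dξ) = exp(φ(t,u) + ⟨x, ψ(t,u)⟩) for all t ≥ 0, x ∈ D, u ∈ 𝒰. Then for all s,t ≥ 0, u ∈ 𝒰 and x ∈ D: exp(φ(t+s,u) + ⟨x, ψ(t+s,u)⟩) = exp(φ(t,u) + φ(s,ψ(t,u)) + ⟨x, ψ(s,ψ(t,u))⟩). -/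
/-!
The Chapman–Kolmogorov equation says that `p_{t+s}(x, ·)` is the mixture `∫ p_t(y, ·) p_s(x, dy)`.
For `u ∈ 𝒰` the function `ξ ↦ e^{⟨u,ξ⟩}` is bounded on `D`, hence integrable against every `p_t(x, ·)`
(`integrable_exp_pair`), so it may be integrated against this mixture:
`e^{φ(t+s,u) + ⟨x,ψ(t+s,u)⟩} = ∫ ∫ e^{⟨u,ξ⟩} p_t(y,dξ) p_s(x,dy) = e^{φ(t,u)} ∫ e^{⟨y,ψ(t,u)⟩} p_s(x,dy)`.
Since `ψ(t,u) ∈ 𝒰`, the affine formula at time `s` evaluates the last integral and gives the claim.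

All integrals are over `D`, so the transition measures are encoded as a kernel on the whole space,
equal to `p_t(y, ·)` restricted to `D` for `y ∈ D` and to `0` for `y ∉ D`. Killing the points outside
`D` makes the kernel finite although nothing is assumed about `p_t(y, ·)` there.
-/

open MeasureTheory Filter Topology

noncomputable section

/-- The set `𝒰 = {u ∈ ℂ^d : sup_{x∈D} Re⟨u,x⟩ < ∞}`. -/
def Uset (d : ℕ) (D : Set (EuclideanSpace ℝ (Fin d))) : Set (EuclideanSpace ℂ (Fin d)) :=
  {u | ∃ C : ℝ, ∀ x ∈ D, (pair u x).re ≤ C}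

open ProbabilityTheory in
/-- The kernel `y ↦ p y` cut down to `D` in both variables: it is `(p y).restrict D` for `y ∈ D`, and
the zero measure for `y ∉ D`. -/
def cutKernel {E : Type*} [MeasurableSpace E] (D : Set E) (hD : MeasurableSet D) (p : E → Measure E)
    (hp : ∀ A : Set E, MeasurableSet A → Measurable (fun x => p x A)) : Kernel E E where
  toFun := D.indicator (fun y => (p y).restrict D)
  measurable' := by
    refine Measurable.indicator (Measure.measurable_of_measurable_coe _ fun A hA => ?_) hD
    simpa only [Measure.restrict_apply hA] using hp _ (hA.inter hD)

lemma cutKernel_of_mem {E : Type*} [MeasurableSpace E] {D : Set E} (hD : MeasurableSet D)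
    {p : E → Measure E} (hp : ∀ A : Set E, MeasurableSet A → Measurable (fun x => p x A))
    {y : E} (hy : y ∈ D) : cutKernel D hD p hp y = (p y).restrict D :=
  Set.indicator_of_mem hy (fun y => (p y).restrict D)

lemma isFiniteKernel_cutKernel {E : Type*} [MeasurableSpace E] {D : Set E} (hD : MeasurableSet D)
    {p : E → Measure E} (hp : ∀ A : Set E, MeasurableSet A → Measurable (fun x => p x A))
    (hone : ∀ y ∈ D, p y D = 1) : ProbabilityTheory.IsFiniteKernel (cutKernel D hD p hp) := by
  refine ⟨1, ENNReal.one_lt_top, fun y => ?_⟩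
  by_cases hy : y ∈ D
  · rw [cutKernel_of_mem hD hp hy, Measure.restrict_apply_univ, hone y hy]
  · have : cutKernel D hD p hp y = 0 :=
      Set.indicator_of_notMem hy (fun y => (p y).restrict D)
    simp [this]

lemma measurable_exp_pair {d : ℕ} (u : EuclideanSpace ℂ (Fin d)) :
    Measurable (fun ξ => Complex.exp (pair u ξ)) := by
  unfold pair
  fun_prop

/-- For `u ∈ 𝒰` the modulus `e^{Re⟨u,ξ⟩}` is bounded on `D`, so `e^{⟨u,ξ⟩}` is integrable. -/
lemma integrable_exp_pair {d : ℕ} {D : Set (EuclideanSpace ℝ (Fin d))} (hD : MeasurableSet D)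
    {u : EuclideanSpace ℂ (Fin d)} (hu : u ∈ Uset d D)
    (μ : Measure (EuclideanSpace ℝ (Fin d))) [IsFiniteMeasure μ] :
    Integrable (fun ξ => Complex.exp (pair u ξ)) (μ.restrict D) := by
  obtain ⟨C, hC⟩ := hu
  refine Integrable.of_bound (measurable_exp_pair u).aestronglyMeasurable (Real.exp C) ?_
  filter_upwards [ae_restrict_mem hD] with ξ hξ
  rw [Complex.norm_exp]
  exact Real.exp_le_exp.2 (hC ξ hξ)

/-- For a family of probability kernels `(p_t)` on the nonempty Borel set
`D` satisfying the Chapman–Kolmogorov equations, if the Fourier–Laplace transform is of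
the exponentially affine form `exp(φ(t,u) + ⟨x, ψ(t,u)⟩)` with `ψ` taking values in `𝒰`,
then the exponentiated semi-flow property holds:
`exp(φ(t+s,u) + ⟨x,ψ(t+s,u)⟩) = exp(φ(t,u) + φ(s,ψ(t,u)) + ⟨x,ψ(s,ψ(t,u))⟩)`. -/
theorem semiflow_exponentiated
    (d : ℕ) (D : Set (EuclideanSpace ℝ (Fin d)))
    (hDne : D.Nonempty) (hDmeas : MeasurableSet D)
    (p : ℝ → EuclideanSpace ℝ (Fin d) → Measure (EuclideanSpace ℝ (Fin d)))
    (hprob : ∀ t : ℝ, 0 ≤ t → ∀ x ∈ D, IsProbabilityMeasure (p t x))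
    (hfull : ∀ t : ℝ, 0 ≤ t → ∀ x ∈ D, p t x D = 1)
    (hker : ∀ t : ℝ, 0 ≤ t → ∀ A : Set (EuclideanSpace ℝ (Fin d)), MeasurableSet A →
      Measurable (fun x => p t x A))
    (hCK : ∀ s t : ℝ, 0 ≤ s → 0 ≤ t → ∀ x ∈ D,
      ∀ A : Set (EuclideanSpace ℝ (Fin d)), MeasurableSet A → A ⊆ D →
        p (t + s) x A = ∫⁻ y in D, p t y A ∂(p s x))
    (φ : ℝ → EuclideanSpace ℂ (Fin d) → ℂ)
    (ψ : ℝ → EuclideanSpace ℂ (Fin d) → EuclideanSpace ℂ (Fin d))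
    (hψU : ∀ t : ℝ, 0 ≤ t → ∀ u ∈ Uset d D, ψ t u ∈ Uset d D)
    (haffine : ∀ t : ℝ, 0 ≤ t → ∀ x ∈ D, ∀ u ∈ Uset d D,
      (∫ ξ in D, Complex.exp (pair u ξ) ∂(p t x)) = Complex.exp (φ t u + pair (ψ t u) x)) :
    ∀ s t : ℝ, 0 ≤ s → 0 ≤ t → ∀ u ∈ Uset d D, ∀ x ∈ D,
      Complex.exp (φ (t + s) u + pair (ψ (t + s) u) x)
        = Complex.exp (φ t u + φ s (ψ t u) + pair (ψ s (ψ t u)) x) := by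
  intro s t hs ht u hu x hx
  have hts : 0 ≤ t + s := add_nonneg ht hs
  have := hprob s hs x hx
  have := hprob (t + s) hts x hx
  set κ := cutKernel D hDmeas (p t) (hker t ht) with hκ
  have : ProbabilityTheory.IsFiniteKernel κ :=
    isFiniteKernel_cutKernel hDmeas (hker t ht) (hfull t ht)
  have hmix : (p (t + s) x).restrict D = ((p s x).restrict D).bind κ := by
    ext A hA
    rw [Measure.restrict_apply hA, hCK s t hs ht x hx _ (hA.inter hDmeas) Set.inter_subset_right,
      Measure.bind_apply hA κ.aemeasurable]
    refine setLIntegral_congr_fun hDmeas fun y hy => ?_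
    simp only [hκ, cutKernel_of_mem hDmeas (hker t ht) hy, Measure.restrict_apply hA]
  have hint := integrable_exp_pair hDmeas hu (p (t + s) x)
  rw [← haffine (t + s) hts x hx u hu, hmix]
  rw [hmix] at hint
  calc ∫ ξ, Complex.exp (pair u ξ) ∂(((p s x).restrict D).bind κ)
      = ∫ y in D, ∫ ξ, Complex.exp (pair u ξ) ∂κ y ∂(p s x) :=
        -- The measure `μ.bind κ` is the composition of `κ` with the constant kernel `μ`.
        ProbabilityTheory.Kernel.integral_comp
          (κ := ProbabilityTheory.Kernel.const Unit ((p s x).restrict D)) (a := ()) hint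
    _ = ∫ y in D, Complex.exp (φ t u) * Complex.exp (pair (ψ t u) y) ∂(p s x) := by
        refine setIntegral_congr_fun hDmeas fun y hy => ?_
        simp only [hκ, cutKernel_of_mem hDmeas (hker t ht) hy]
        rw [haffine t ht y hy u hu, Complex.exp_add]
    _ = Complex.exp (φ t u + φ s (ψ t u) + pair (ψ s (ψ t u)) x) := by
        rw [integral_const_mul, haffine s hs x hx _ (hψU t ht u hu), ← Complex.exp_add, add_assoc]
end
end

section
/- Let D be a nonempty Borel subset of ℝ^d whose affine hull is all of ℝ^d, and 𝒰 = {u ∈ ℂ^d : sup_{x∈D} Re⟨u,x⟩ < ∞}. Let φ : [0,∞) × 𝒰 → ℂ and ψ : [0,∞) × 𝒰 → 𝒰 satisfy φ(0,w) = 0 and ψ(0,w) = w for all w ∈ 𝒰. Fix t ≥ 0, u ∈ 𝒰 and S > 0, and assume: (a) the maps s ↦ φ(t+s,u), s ↦ φ(s,ψ(t,u)), s ↦ ψ(t+s,u) and s ↦ ψ(s,ψ(t,u)) are continuous on [0,S]; (b) for every s ∈ [0,S] and every x ∈ D, exp(φ(t+s,u) + ⟨x, ψ(t+s,u)⟩)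 = exp(φ(t,u) + φ(s,ψ(t,u)) + ⟨x, ψ(s,ψ(t,u))⟩). Then for every s ∈ [0,S]: φ(t+s,u) = φ(t,u) + φ(s,ψ(t,u)) and ψ(t+s,u) = ψ(s,ψ(t,u)). -/
/-!
For fixed `x ∈ D`, the two exponents are continuous functions of `s` on the connected set `[0,S]`.
They agree at `s = 0`, since `φ(0,·) = 0` and `ψ(0,w) = w`, and their exponentials agree throughout.
Both are therefore lifts of the same path through the covering map `exp : ℂ → ℂ \ {0}`, and
uniqueness of lifts makes them equal on `[0,S]`.

For fixed `s` this equality says that two affine functions of `x` agree on `D`, hence on its affine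
span, which is all of `ℝ^d`. Evaluating at the origin and at the standard basis vectors compares the
constant terms and the linear coefficients.
-/

open MeasureTheory Filter Topology

noncomputable section

lemma continuous_pair_left {d : ℕ} (x : EuclideanSpace ℝ (Fin d)) :
    Continuous fun u : EuclideanSpace ℂ (Fin d) => pair u x := by
  unfold pair
  fun_prop

/-- Uniqueness of continuous logarithms along an interval. -/
lemma eqOn_Icc_of_exp_eq {S : ℝ} (hS : 0 ≤ S) {f g : ℝ → ℂ}
    (hf : ContinuousOn f (Set.Icc 0 S)) (hg : ContinuousOn g (Set.Icc 0 S))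
    (hexp : ∀ s ∈ Set.Icc (0 : ℝ) S, Complex.exp (f s) = Complex.exp (g s))
    (h0 : f 0 = g 0) : Set.EqOn f g (Set.Icc 0 S) :=
  Complex.isCoveringMap_exp.eqOn_of_comp_eqOn isPreconnected_Icc hf hg
    (fun s hs => Subtype.ext (hexp s hs)) (Set.left_mem_Icc.mpr hS) h0

lemma pair_smul_vsub_vadd {d : ℕ} (v : EuclideanSpace ℂ (Fin d)) (c : ℝ)
    (x y z : EuclideanSpace ℝ (Fin d)) :
    pair v (c • (x -ᵥ y) +ᵥ z) = c * (pair v x - pair v y) + pair v z := by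
  simp only [pair, ← Finset.sum_sub_distrib, Finset.mul_sum, ← Finset.sum_add_distrib]
  refine Finset.sum_congr rfl fun i _ => ?_
  simp
  ring

/-- An affine function `x ↦ a + ⟨v,x⟩` is determined by its values on an affinely spanning set. -/
lemma coeff_eq_of_eq_on_spanning {d : ℕ} {D : Set (EuclideanSpace ℝ (Fin d))}
    (hspan : affineSpan ℝ D = ⊤) {a b : ℂ} {v w : EuclideanSpace ℂ (Fin d)}
    (h : ∀ x ∈ D, a + pair v x = b + pair w x) : a = b ∧ v = w := by
  have hall : ∀ x, a + pair v x = b + pair w x := fun x => by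
    refine affineSpan_induction (k := ℝ) (s := D) (p := fun x => a + pair v x = b + pair w x)
      (hspan ▸ AffineSubspace.mem_top ℝ _ x) h fun c x y z hx hy hz => ?_
    rw [pair_smul_vsub_vadd, pair_smul_vsub_vadd]
    linear_combination (c : ℂ) * (hx - hy) + hz
  have hab : a = b := by simpa [pair] using hall 0
  refine ⟨hab, ?_⟩
  ext i
  simpa [pair, hab, Pi.single_apply, apply_ite Complex.ofReal] using hall (EuclideanSpace.single i 1)

/-- If `D` affinely spans `ℝ^d`, `φ(0,·) = 0`, `ψ(0,w) = w`, the maps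
`s ↦ φ(t+s,u)`, `s ↦ φ(s,ψ(t,u))`, `s ↦ ψ(t+s,u)`, `s ↦ ψ(s,ψ(t,u))` are continuous on
`[0,S]`, and the exponentiated semi-flow identity holds for all `s ∈ [0,S]` and `x ∈ D`,
then the logarithmic semi-flow identities hold on `[0,S]`. -/
theorem semiflow_from_exponentiated
    (d : ℕ) (D : Set (EuclideanSpace ℝ (Fin d)))
    (hDne : D.Nonempty) (hDmeas : MeasurableSet D)
    (hspan : affineSpan ℝ D = ⊤)
    (φ : ℝ → EuclideanSpace ℂ (Fin d) → ℂ)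
    (ψ : ℝ → EuclideanSpace ℂ (Fin d) → EuclideanSpace ℂ (Fin d))
    (hψU : ∀ s : ℝ, 0 ≤ s → ∀ w ∈ Uset d D, ψ s w ∈ Uset d D)
    (hφ0 : ∀ w ∈ Uset d D, φ 0 w = 0)
    (hψ0 : ∀ w ∈ Uset d D, ψ 0 w = w)
    (t : ℝ) (ht : 0 ≤ t) (u : EuclideanSpace ℂ (Fin d)) (hu : u ∈ Uset d D)
    (S : ℝ) (hS : 0 < S)
    (hc1 : ContinuousOn (fun s : ℝ => φ (t + s) u) (Set.Icc 0 S))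
    (hc2 : ContinuousOn (fun s : ℝ => φ s (ψ t u)) (Set.Icc 0 S))
    (hc3 : ContinuousOn (fun s : ℝ => ψ (t + s) u) (Set.Icc 0 S))
    (hc4 : ContinuousOn (fun s : ℝ => ψ s (ψ t u)) (Set.Icc 0 S))
    (hexp : ∀ s ∈ Set.Icc (0:ℝ) S, ∀ x ∈ D,
      Complex.exp (φ (t + s) u + pair (ψ (t + s) u) x)
        = Complex.exp (φ t u + φ s (ψ t u) + pair (ψ s (ψ t u)) x)) :
    ∀ s ∈ Set.Icc (0:ℝ) S,
      φ (t + s) u = φ t u + φ s (ψ t u) ∧ ψ (t + s) u = ψ s (ψ t u) := by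
  have hw : ψ t u ∈ Uset d D := hψU t ht u hu
  intro s hs
  refine coeff_eq_of_eq_on_spanning hspan fun x hx => ?_
  have hpair := continuous_pair_left x
  refine eqOn_Icc_of_exp_eq hS.le (f := fun s => φ (t + s) u + pair (ψ (t + s) u) x)
    (g := fun s => φ t u + φ s (ψ t u) + pair (ψ s (ψ t u)) x)
    (hc1.add (hpair.comp_continuousOn hc3))
    ((continuousOn_const.add hc2).add (hpair.comp_continuousOn hc4))
    (fun r hr => hexp r hr x hx) ?_ hs
  simp [hφ0 _ hw, hψ0 _ hw]
end
end

section
/- Let (Ω, ℱ, (𝒢_n)_{n∈ℕ}, ℙ) be a filtered probability space, D a nonempty Borel subset of ℝ^d, 𝒰 = {u ∈ ℂ^d : sup_{x∈D} Re⟨u,x⟩ < ∞}, and u ∈ 𝒰. Let (X_n)_{n∈ℕ} be a process adapted to (𝒢_n) with X_n ∈ D a.s. for every n, and let φ ∈ ℂ, ψ ∈ ℂ^d be such that for every n ≥ 1: 𝔼[exp⟨u, X_n⟩ | 𝒢_{n−1}] = exp(φ + ⟨ψ, X_{n−1}⟩) ℙ-a.s. Define L_n := exp( ⟨u, X_n −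 X_0⟩ − Σ_{j=1}^n ( φ + ⟨ψ − u, X_{j−1}⟩ ) ), with L_0 = 1, and assume each L_n is ℙ-integrable. Then (L_n)_{n∈ℕ} is a complex-valued martingale with respect to (𝒢_n)_{n∈ℕ}. -/
/-!
Write `L (n+1) = W n * exp ⟨u, X (n+1)⟩`, where
`W n = exp (-⟨u, X 0⟩ - ∑_{j ≤ n} (φ + ⟨ψ - u, X j⟩))` is `𝒢 n`-measurable. Since
`Re ⟨u, ·⟩` is bounded above on `D`, the second factor is bounded, hence integrable, so `W n` can
be pulled out of the conditional expectation given `𝒢 n`. The affine transform formula turns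
what remains into `W n * exp (φ + ⟨ψ, X n⟩)`, and the `j = n` summand of `W n` cancels
`φ + ⟨ψ, X n⟩` up to `⟨u, X n⟩`, leaving `L n`.
-/

open MeasureTheory Filter Topology

noncomputable section

lemma measurable_pair {d : ℕ} (u : EuclideanSpace ℂ (Fin d)) : Measurable (pair u) := by
  unfold pair
  fun_prop

lemma pair_sub_left {d : ℕ} (u v : EuclideanSpace ℂ (Fin d)) (x : EuclideanSpace ℝ (Fin d)) :
    pair (u - v) x = pair u x - pair v x := by
  simp [pair, sub_mul, Finset.sum_sub_distrib]

lemma pair_sub_right {d : ℕ} (u : EuclideanSpace ℂ (Fin d)) (x y : EuclideanSpace ℝ (Fin d)) :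
    pair u (x - y) = pair u x - pair u y := by
  simp [pair, mul_sub, Finset.sum_sub_distrib]

/-- Lemma 3.5 of the paper, discrete form: if `(X_n)` is adapted, takes
values a.s. in `D`, and satisfies
`𝔼[exp⟨u,X_n⟩ | 𝒢_{n-1}] = exp(φ + ⟨ψ, X_{n-1}⟩)` a.s. for all `n ≥ 1`, then
`L_n = exp(⟨u, X_n − X_0⟩ − ∑_{j=1}^n (φ + ⟨ψ − u, X_{j−1}⟩))` (each assumed
integrable) is a complex-valued martingale for `(𝒢_n)`. -/
theorem discrete_exponential_martingale
    (d : ℕ) {Ω : Type*} {m : MeasurableSpace Ω} (P : Measure Ω)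
    [IsProbabilityMeasure P] (𝒢 : Filtration ℕ m)
    (D : Set (EuclideanSpace ℝ (Fin d))) (hDne : D.Nonempty) (hDmeas : MeasurableSet D)
    (u : EuclideanSpace ℂ (Fin d)) (hu : ∃ C : ℝ, ∀ x ∈ D, (pair u x).re ≤ C)
    (X : ℕ → Ω → EuclideanSpace ℝ (Fin d)) (hadapted : Adapted 𝒢 X)
    (hXD : ∀ n : ℕ, ∀ᵐ ω ∂P, X n ω ∈ D)
    (φ : ℂ) (ψ : EuclideanSpace ℂ (Fin d))
    (hcond : ∀ n : ℕ, 1 ≤ n →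
      P[fun ω => Complex.exp (pair u (X n ω)) | 𝒢 (n - 1)]
        =ᵐ[P] fun ω => Complex.exp (φ + pair ψ (X (n - 1) ω)))
    (L : ℕ → Ω → ℂ)
    (hL : ∀ n ω, L n ω = Complex.exp (pair u (X n ω - X 0 ω)
        - ∑ j ∈ Finset.range n, (φ + pair (ψ - u) (X j ω))))
    (hint : ∀ n, Integrable (L n) P) :
    Martingale L 𝒢 P := by
  obtain ⟨C, hC⟩ := hu
  -- all variables up to time `n` are measurable at time `n`
  have hXm : ∀ v : EuclideanSpace ℂ (Fin d), ∀ j n, j ≤ n →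
      Measurable[𝒢 n] (fun ω => pair v (X j ω)) := fun v j n hjn =>
    (measurable_pair v).comp ((hadapted j).mono (𝒢.mono hjn) le_rfl)
  have hSm : ∀ k n, k ≤ n + 1 →
      Measurable[𝒢 n] (fun ω => ∑ j ∈ Finset.range k, (φ + pair (ψ - u) (X j ω))) := by
    intro k n hk
    refine Finset.measurable_fun_sum _ fun j hj => ?_
    have hj' := Finset.mem_range.1 hj
    exact (hXm (ψ - u) j n (by omega)).const_add φ
  have hadp : StronglyAdapted 𝒢 L := by
    intro n
    have hLn : L n = fun ω => Complex.exp (pair u (X n ω) - pair u (X 0 ω)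
        - ∑ j ∈ Finset.range n, (φ + pair (ψ - u) (X j ω))) := by
      funext ω
      rw [hL, pair_sub_right]
    rw [hLn]
    exact (Complex.measurable_exp.comp (((hXm u n n le_rfl).sub (hXm u 0 n n.zero_le)).sub
      (hSm n n n.le_succ))).stronglyMeasurable
  refine martingale_nat hadp hint fun n => ?_
  let W : Ω → ℂ := fun ω => Complex.exp (-pair u (X 0 ω)
    - ∑ j ∈ Finset.range (n + 1), (φ + pair (ψ - u) (X j ω)))
  let E : Ω → ℂ := fun ω => Complex.exp (pair u (X (n + 1) ω))
  have hWm : StronglyMeasurable[𝒢 n] W :=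
    (Complex.measurable_exp.comp ((hXm u 0 n n.zero_le).neg.sub
      (hSm (n + 1) n le_rfl))).stronglyMeasurable
  have hEm : Measurable E :=
    Complex.measurable_exp.comp ((hXm u (n + 1) (n + 1) le_rfl).mono (𝒢.le _) le_rfl)
  have hEint : Integrable E P := by
    refine Integrable.of_bound hEm.aestronglyMeasurable (Real.exp C) ?_
    filter_upwards [hXD (n + 1)] with ω hω
    rw [Complex.norm_exp]
    exact Real.exp_le_exp.2 (hC _ hω)
  have hLWE : L (n + 1) = fun ω => ContinuousLinearMap.mul ℝ ℂ (W ω) (E ω) := by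
    funext ω
    simp only [ContinuousLinearMap.mul_apply', W, E]
    rw [hL, pair_sub_right, ← Complex.exp_add]
    congr 1
    ring
  have hpull := condExp_bilin_of_stronglyMeasurable_left (ContinuousLinearMap.mul ℝ ℂ) hWm
    (hLWE ▸ hint (n + 1)) hEint
  rw [← hLWE] at hpull
  have hc := hcond (n + 1) (by omega)
  simp only [Nat.add_sub_cancel] at hc
  filter_upwards [hpull, hc] with ω h1 h2
  rw [h1, h2]
  simp only [ContinuousLinearMap.mul_apply', W]
  rw [hL, ← Complex.exp_add, Finset.sum_range_succ, pair_sub_left ψ u (X n ω), pair_sub_right]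
  congr 1
  ring
end
end

section
/- Let D be a nonempty Borel subset of ℝ^d whose affine hull is all of ℝ^d, and let (Ω, ℱ, (ℱ_t)_{t≥0}, (ℙ^x)_{x∈D}, X, φ, ψ) be a conservative affine process setup. Then the process is regular: for every u ∈ 𝒰 the derivatives F(u) := lim_{t→0+} φ(t,u)/t and R(u) := lim_{t→0+} (ψ(t,u) − u)/t exist (as finite limits in ℂ and ℂ^d respectively), and the functions u ↦ F(u) and u ↦ R(u) are continuous on 𝒰_k for every k ∈ ℕ. -/
/-!
# Regularity of affine processes

Write `Δ(h,v,y) = exp(φ(h,v) + ⟨ψ(h,v),y⟩) - exp⟨v,y⟩` for the one-step drift of `exp⟨v,X⟩` at `y`.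
Observe `X`, started at `x`, on the grid `h ℕ` and freeze it at the first grid time `σ` at which the path
has left a small closed ball around `x`, or after `n` steps. Summing the affine Markov property over
the steps gives the Dynkin formula
`E[exp⟨v,X_σ⟩] - exp⟨v,x⟩ = E[∑_{j h < σ} Δ(h,v,X_{jh})]`. In the sum `X_{jh}` stays in the ball, so
if the increments `(φ(h,v), ψ(h,v) - v)` divided by a scale `a → 0` converge to `w = (α,β)`, every
summand is `a * exp⟨u,x⟩ (α + ⟨β,x⟩)` up to a relative error that is small with the radius
(`drift_close`, `dynkin_estimate`, `dynkin_limit`).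

This is used twice, along arbitrary sequences `h → 0`, `v → u` in `𝒰_m`.

* If the increments were not `O(h)`, take for `a` the norm of the increment and `n ≈ 1 / a`. Then
  `n h → 0`, so `X_σ → x` by right continuity, the left side tends to `0` and `α + ⟨β,x⟩ = 0`. As
  this holds for all `x ∈ D` and `D` spans affinely, `(α,β) = 0`, although it has norm one
  (`no_blowup`).
* With `a = h` and `n ≈ 1 / h`, the grid times `σ` tend from the right to the exit time `θ` of the
  ball, capped at `1`, and `E[exp⟨u,X_θ⟩] - exp⟨u,x⟩ ≈ exp⟨u,x⟩ (α + ⟨β,x⟩) E[θ]`, where `E[θ] > 0`.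
  The left side does not depend on the sequence, hence neither does `(α,β)`
  (`quotient_limit_unique`).

By compactness the difference quotients converge jointly in `(h,v)` (`exists_quotient_limit`), which
contains both the existence of the derivatives and their continuity on `𝒰_m`.
-/


open MeasureTheory Filter Topology

noncomputable section

/-- The set `𝒰_k = {u ∈ ℂ^d : sup_{x∈D} Re⟨u,x⟩ ≤ k}`. -/
def UsetLe (d : ℕ) (D : Set (EuclideanSpace ℝ (Fin d))) (k : ℝ) :
    Set (EuclideanSpace ℂ (Fin d)) :=
  {u | ∀ x ∈ D, (pair u x).re ≤ k}

/-- A conservative affine process with right-continuous paths in `D`, together with the joint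
continuity of `φ` and `ψ` on the sets `𝒰_k`. -/
structure AffineSetup {d : ℕ} (D : Set (EuclideanSpace ℝ (Fin d)))
    {Ω : Type*} {mΩ : MeasurableSpace Ω} (ℱ : Filtration ℝ mΩ)
    (P : EuclideanSpace ℝ (Fin d) → Measure Ω)
    (X : ℝ → Ω → EuclideanSpace ℝ (Fin d))
    (φ : ℝ → EuclideanSpace ℂ (Fin d) → ℂ)
    (ψ : ℝ → EuclideanSpace ℂ (Fin d) → EuclideanSpace ℂ (Fin d)) : Prop where
  prob : ∀ x ∈ D, IsProbabilityMeasure (P x)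
  adapted : ∀ t : ℝ, 0 ≤ t → StronglyMeasurable[ℱ t] (X t)
  mem : ∀ t : ℝ, 0 ≤ t → ∀ ω, X t ω ∈ D
  start : ∀ x ∈ D, P x {ω | X 0 ω = x} = 1
  rightcont : ∀ ω, ∀ t : ℝ, 0 ≤ t → ContinuousWithinAt (fun s => X s ω) (Set.Ici t) t
  phi_zero : ∀ u ∈ Uset d D, φ 0 u = 0
  psi_zero : ∀ u ∈ Uset d D, ψ 0 u = u
  phi_cont : ∀ k : ℕ, ContinuousOn (fun p : ℝ × EuclideanSpace ℂ (Fin d) => φ p.1 p.2)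
    (Set.Ici (0:ℝ) ×ˢ UsetLe d D k)
  psi_cont : ∀ k : ℕ, ContinuousOn (fun p : ℝ × EuclideanSpace ℂ (Fin d) => ψ p.1 p.2)
    (Set.Ici (0:ℝ) ×ˢ UsetLe d D k)
  affine : ∀ x ∈ D, ∀ s t : ℝ, 0 ≤ s → 0 ≤ t → ∀ u ∈ Uset d D,
    (P x)[fun ω => Complex.exp (pair u (X (t + s) ω)) | ℱ s]
      =ᵐ[P x] fun ω => Complex.exp (φ t u + pair (ψ t u) (X s ω))

/-! ### The bilinear pairing -/

lemma continuous_pair_s12 {d : ℕ} :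
    Continuous fun p : EuclideanSpace ℂ (Fin d) × EuclideanSpace ℝ (Fin d) => pair p.1 p.2 := by
  unfold pair
  fun_prop

lemma tendsto_pair {d : ℕ} {ι : Type*} {l : Filter ι} {f : ι → EuclideanSpace ℂ (Fin d)}
    {g : ι → EuclideanSpace ℝ (Fin d)} {u : EuclideanSpace ℂ (Fin d)}
    {x : EuclideanSpace ℝ (Fin d)} (hf : Tendsto f l (𝓝 u)) (hg : Tendsto g l (𝓝 x)) :
    Tendsto (fun i => pair (f i) (g i)) l (𝓝 (pair u x)) := by
  unfold pair
  refine tendsto_finsetSum _ fun i _ => Tendsto.mul ?_ ?_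
  · exact ((PiLp.continuous_apply 2 (fun _ : Fin d => ℂ) i).tendsto u).comp hf
  · exact (Complex.continuous_ofReal.tendsto _).comp
      (((PiLp.continuous_apply 2 (fun _ : Fin d => ℝ) i).tendsto x).comp hg)

lemma tendsto_exp_pair {d : ℕ} {ι : Type*} {l : Filter ι} {f : ι → EuclideanSpace ℂ (Fin d)}
    {g : ι → EuclideanSpace ℝ (Fin d)} {u : EuclideanSpace ℂ (Fin d)}
    {x : EuclideanSpace ℝ (Fin d)} (hf : Tendsto f l (𝓝 u)) (hg : Tendsto g l (𝓝 x)) :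
    Tendsto (fun i => Complex.exp (pair (f i) (g i))) l (𝓝 (Complex.exp (pair u x))) :=
  (Complex.continuous_exp.tendsto _).comp (tendsto_pair hf hg)

lemma pair_smul_left {d : ℕ} (c : ℂ) (u : EuclideanSpace ℂ (Fin d))
    (x : EuclideanSpace ℝ (Fin d)) : pair (c • u) x = c * pair u x := by
  simp [pair, Finset.mul_sum, mul_assoc]

lemma pair_affine_right {d : ℕ} (u : EuclideanSpace ℂ (Fin d)) (c : ℝ)
    (x y z : EuclideanSpace ℝ (Fin d)) :
    pair u (c • (x - y) + z) = c * (pair u x - pair u y) + pair u z := by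
  simp only [pair, ← Finset.sum_sub_distrib, Finset.mul_sum, ← Finset.sum_add_distrib]
  refine Finset.sum_congr rfl fun i _ => ?_
  simp
  ring

/-- An affine function on `ℝ^d` that vanishes on an affinely spanning set is zero. -/
lemma eq_zero_of_affine {d : ℕ} {D : Set (EuclideanSpace ℝ (Fin d))}
    (hspan : affineSpan ℝ D = ⊤) {α : ℂ} {β : EuclideanSpace ℂ (Fin d)}
    (h : ∀ x ∈ D, α + pair β x = 0) : α = 0 ∧ β = 0 := by
  have key : ∀ x : EuclideanSpace ℝ (Fin d), α + pair β x = 0 := by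
    intro x
    have hx : x ∈ affineSpan ℝ D := by rw [hspan]; trivial
    refine affineSpan_induction (p := fun x => α + pair β x = 0) hx h ?_
    intro c u v w hu hv hw
    simp only [vsub_eq_sub, vadd_eq_add, pair_affine_right]
    linear_combination (c : ℂ) * hu - c * hv + hw
  have h0 : α = 0 := by simpa [pair] using key 0
  refine ⟨h0, ?_⟩
  ext i
  have := key (EuclideanSpace.single i 1)
  simpa [pair, h0, PiLp.single_apply, Finset.sum_ite_eq', apply_ite] using this

lemma norm_exp_pair_le {d : ℕ} {D : Set (EuclideanSpace ℝ (Fin d))} {m : ℝ}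
    {v : EuclideanSpace ℂ (Fin d)} (hv : v ∈ UsetLe d D m) {y : EuclideanSpace ℝ (Fin d)}
    (hy : y ∈ D) : ‖Complex.exp (pair v y)‖ ≤ Real.exp m := by
  rw [Complex.norm_exp]
  exact Real.exp_le_exp.2 (hv y hy)

lemma mem_Uset_of_mem_UsetLe {d : ℕ} {D : Set (EuclideanSpace ℝ (Fin d))} {m : ℝ}
    {v : EuclideanSpace ℂ (Fin d)} (hv : v ∈ UsetLe d D m) : v ∈ Uset d D := ⟨m, hv⟩

/-! ### The process observed on a grid until it leaves a ball -/

/-- The event that `X` stays in the closed ball around `x` of radius `r` on all of `[0, s]`. -/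
def stay {d : ℕ} {Ω : Type*} (X : ℝ → Ω → EuclideanSpace ℝ (Fin d))
    (x : EuclideanSpace ℝ (Fin d)) (r s : ℝ) : Set Ω :=
  {ω | ∀ s' : ℝ, 0 ≤ s' → s' ≤ s → X s' ω ∈ Metric.closedBall x r}

open Classical in
/-- The number of grid times `j * h`, `j < n`, up to which `X` has stayed in the ball. Since `stay`
is decreasing in time, `kap * h` is the first grid time at which the ball has been left, capped
at `n * h`. -/
def kap {d : ℕ} {Ω : Type*} (X : ℝ → Ω → EuclideanSpace ℝ (Fin d))
    (x : EuclideanSpace ℝ (Fin d)) (r h : ℝ) (n : ℕ) (ω : Ω) : ℕ :=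
  ((Finset.range n).filter fun j : ℕ => ω ∈ stay X x r (j * h)).card

section grid

variable {d : ℕ} {Ω : Type*} {X : ℝ → Ω → EuclideanSpace ℝ (Fin d)}
  {x : EuclideanSpace ℝ (Fin d)} {r h : ℝ} {n : ℕ} {ω : Ω}

lemma stay_anti {s t : ℝ} (hst : s ≤ t) : stay X x r t ⊆ stay X x r s :=
  fun _ hω s' h0 h1 => hω s' h0 (h1.trans hst)

lemma kap_le : kap X x r h n ω ≤ n := by
  classical
  exact (Finset.card_filter_le _ _).trans (by simp)

lemma stay_iff_lt_kap (hh : 0 ≤ h) {j : ℕ} (hj : j < n) :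
    ω ∈ stay X x r (j * h) ↔ j < kap X x r h n ω := by
  classical
  have anti : ∀ i k : ℕ, i ≤ k → ω ∈ stay X x r (k * h) → ω ∈ stay X x r (i * h) :=
    fun i k hik hk => stay_anti (by gcongr) hk
  unfold kap
  constructor
  · intro hp
    have : Finset.range (j + 1) ⊆
        (Finset.range n).filter fun j : ℕ => ω ∈ stay X x r (j * h) := by
      intro i hi
      simp only [Finset.mem_range, Finset.mem_filter] at hi ⊢
      exact ⟨by omega, anti i j (by omega) hp⟩
    have := Finset.card_le_card this
    simp only [Finset.card_range] at this
    omega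
  · intro hlt
    by_contra hp
    have : ((Finset.range n).filter fun j : ℕ => ω ∈ stay X x r (j * h)) ⊆ Finset.range j := by
      intro i hi
      simp only [Finset.mem_range, Finset.mem_filter] at hi ⊢
      by_contra hij
      exact hp (anti j i (by omega) hi.2)
    have := Finset.card_le_card this
    simp only [Finset.card_range] at this
    omega

lemma filter_eq_range_kap (hh : 0 ≤ h) [DecidablePred fun j : ℕ => ω ∈ stay X x r (j * h)] :
    ((Finset.range n).filter fun j : ℕ => ω ∈ stay X x r (j * h))
      = Finset.range (kap X x r h n ω) := by
  ext j
  simp only [Finset.mem_range, Finset.mem_filter]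
  constructor
  · rintro ⟨h1, h2⟩
    exact (stay_iff_lt_kap hh h1).1 h2
  · intro hj
    have h1 : j < n := hj.trans_le kap_le
    exact ⟨h1, (stay_iff_lt_kap hh h1).2 hj⟩

/-- Telescoping of a function along the stopped grid. -/
lemma telescope (hh : 0 ≤ h) (f : ℝ → Ω → ℂ) :
    f (kap X x r h n ω * h) ω = f 0 ω + ∑ j ∈ Finset.range n,
      (stay X x r (j * h)).indicator (fun ω => f (h + j * h) ω - f (j * h) ω) ω := by
  classical
  simp only [Set.indicator_apply]
  rw [← Finset.sum_filter, filter_eq_range_kap hh]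
  have := Finset.sum_range_sub (fun j : ℕ => f (j * h) ω) (kap X x r h n ω)
  have e : ∀ j : ℕ, h + j * h = ((j + 1 : ℕ) : ℝ) * h := fun j => by push_cast; ring
  simp only [e, this]
  simp

lemma kap_eq_sum : (kap X x r h n ω : ℝ) = ∑ j ∈ Finset.range n,
      (stay X x r (j * h)).indicator (fun _ => (1 : ℝ)) ω := by
  classical
  simp only [Set.indicator_apply]
  rw [← Finset.sum_filter]
  simp [kap]

end grid

section paths

variable {d : ℕ} {D : Set (EuclideanSpace ℝ (Fin d))}
    {Ω : Type*} {mΩ : MeasurableSpace Ω} {ℱ : Filtration ℝ mΩ}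
    {P : EuclideanSpace ℝ (Fin d) → Measure Ω}
    {X : ℝ → Ω → EuclideanSpace ℝ (Fin d)}
    {φ : ℝ → EuclideanSpace ℂ (Fin d) → ℂ}
    {ψ : ℝ → EuclideanSpace ℂ (Fin d) → EuclideanSpace ℂ (Fin d)}
    {x : EuclideanSpace ℝ (Fin d)}

/-- By right continuity and closedness of the ball, staying in it is decided at rational times. -/
lemma measurableSet_stay (S : AffineSetup D ℱ P X φ ψ) {r s : ℝ} (hs : 0 ≤ s) :
    MeasurableSet[ℱ s] (stay X x r s) := by
  have e : stay X x r s = (⋂ q : ℚ, {ω | 0 ≤ (q : ℝ) → (q : ℝ) ≤ s →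
      X q ω ∈ Metric.closedBall x r}) ∩ {ω | X s ω ∈ Metric.closedBall x r} := by
    ext ω
    simp only [stay, Set.mem_ofPred_eq, Set.mem_inter_iff, Set.mem_iInter]
    refine ⟨fun h => ⟨fun q h0 h1 => h q h0 h1, h s hs le_rfl⟩, ?_⟩
    rintro ⟨hq, h1⟩ s' h0 hs'
    rcases hs'.eq_or_lt with rfl | hlt
    · exact h1
    by_contra hn
    have hc := (S.rightcont ω s' h0).mono Set.Ioi_subset_Ici_self
    have hev : ∀ᶠ t in 𝓝[>] s', X t ω ∉ Metric.closedBall x r :=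
      hc.eventually (Metric.isClosed_closedBall.isOpen_compl.mem_nhds hn)
    obtain ⟨b, hb, hbb⟩ := (mem_nhdsGT_iff_exists_Ioo_subset).1 hev
    obtain ⟨q, hq1, hq2⟩ := exists_rat_btwn (lt_min (Set.mem_Ioi.1 hb) hlt)
    have hq3 := lt_min_iff.1 hq2
    exact hbb ⟨hq1, hq3.1⟩ (hq q (h0.trans hq1.le) hq3.2.le)
  have meas : ∀ t, 0 ≤ t → t ≤ s → MeasurableSet[ℱ s] {ω | X t ω ∈ Metric.closedBall x r} := by
    intro t h0 hts
    exact ℱ.mono hts _ ((S.adapted t h0).measurable Metric.isClosed_closedBall.measurableSet)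
  rw [e]
  refine MeasurableSet.inter (MeasurableSet.iInter fun q => ?_) (meas s hs le_rfl)
  by_cases h0 : 0 ≤ (q : ℝ)
  · by_cases h1 : (q : ℝ) ≤ s
    · simpa [h0, h1] using meas q h0 h1
    · simp [h1]
  · simp [h0]

lemma measurableSet_stay' (S : AffineSetup D ℱ P X φ ψ) {r s : ℝ} (hs : 0 ≤ s) :
    MeasurableSet (stay X x r s) := ℱ.le s _ (measurableSet_stay S hs)

lemma measurable_exp_pair_s12 (S : AffineSetup D ℱ P X φ ψ) {v : EuclideanSpace ℂ (Fin d)}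
    {t : ℝ} (ht : 0 ≤ t) : Measurable fun ω => Complex.exp (pair v (X t ω)) := by
  have h1 : Measurable (X t) := (S.adapted t ht).measurable.mono (ℱ.le t) le_rfl
  have h2 : Continuous fun y : EuclideanSpace ℝ (Fin d) => Complex.exp (pair v y) :=
    Complex.continuous_exp.comp (continuous_pair_s12.comp (by fun_prop : Continuous fun y => (v, y)))
  exact h2.measurable.comp h1

lemma integrable_exp_pair_s12 (S : AffineSetup D ℱ P X φ ψ) (hx : x ∈ D) {m : ℝ}
    {v : EuclideanSpace ℂ (Fin d)} (hv : v ∈ UsetLe d D m)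
    {t : ℝ} (ht : 0 ≤ t) : Integrable (fun ω => Complex.exp (pair v (X t ω))) (P x) := by
  have := S.prob x hx
  exact Integrable.of_bound (measurable_exp_pair_s12 S ht).aestronglyMeasurable (Real.exp m)
    (Eventually.of_forall fun ω => norm_exp_pair_le hv (S.mem t ht ω))

lemma ae_start (S : AffineSetup D ℱ P X φ ψ) (hx : x ∈ D) : ∀ᵐ ω ∂(P x), X 0 ω = x := by
  have := S.prob x hx
  have hm : MeasurableSet {ω | X 0 ω = x} :=
    ((S.adapted 0 le_rfl).measurable.mono (ℱ.le 0) le_rfl) (measurableSet_singleton x)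
  exact (mem_ae_iff_prob_eq_one hm).2 (S.start x hx)

lemma measurable_kap (S : AffineSetup D ℱ P X φ ψ) {r h : ℝ} (hh : 0 ≤ h) {n : ℕ} :
    Measurable fun ω => (kap X x r h n ω : ℝ) := by
  simp only [kap_eq_sum]
  refine Finset.measurable_sum _ fun j _ => ?_
  exact measurable_const.indicator (measurableSet_stay' S (by positivity))

lemma measurable_exp_kap (S : AffineSetup D ℱ P X φ ψ) {v : EuclideanSpace ℂ (Fin d)}
    {r h : ℝ} (hh : 0 ≤ h) {n : ℕ} :
    Measurable fun ω => Complex.exp (pair v (X (kap X x r h n ω * h) ω)) := by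
  simp only [telescope hh fun t ω => Complex.exp (pair v (X t ω))]
  refine (measurable_exp_pair_s12 S le_rfl).add (Finset.measurable_sum _ fun j _ => ?_)
  exact ((measurable_exp_pair_s12 S (by positivity)).sub
    (measurable_exp_pair_s12 S (by positivity))).indicator (measurableSet_stay' S (by positivity))

/-- The stopped Dynkin formula on a grid of mesh `h`, in the form of an estimate: if the one-step
drift `E^y[e^{⟨v,X_h⟩}] - e^{⟨v,y⟩}` is `a * c` up to an error `δ * a` for all `y` in the ball,
then the expected increment up to the exit is `a * c` times the expected number of steps, up to
the corresponding error. -/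
lemma dynkin_estimate (S : AffineSetup D ℱ P X φ ψ) (hx : x ∈ D) {m : ℝ}
    {v : EuclideanSpace ℂ (Fin d)} (hv : v ∈ UsetLe d D m) {r h a δ : ℝ} (hh : 0 ≤ h)
    {c : ℂ} (n : ℕ)
    (hb : ∀ y ∈ Metric.closedBall x r,
      ‖Complex.exp (φ h v + pair (ψ h v) y) - Complex.exp (pair v y) - a * c‖ ≤ δ * a) :
    ‖∫ ω, Complex.exp (pair v (X (kap X x r h n ω * h) ω)) ∂(P x) - Complex.exp (pair v x)
        - c * ((∫ ω, a * (kap X x r h n ω : ℝ) ∂(P x) : ℝ) : ℂ)‖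
      ≤ δ * ∫ ω, a * (kap X x r h n ω : ℝ) ∂(P x) := by
  have := S.prob x hx
  have hpos : ∀ j : ℕ, 0 ≤ (j : ℝ) * h := fun j => by positivity
  have hG : ∀ j : ℕ, MeasurableSet (stay X x r (j * h)) := fun j => measurableSet_stay' S (hpos j)
  have hint : ∀ j : ℕ, Integrable (fun ω => Complex.exp (pair v (X (h + j * h) ω))
      - Complex.exp (pair v (X (j * h) ω))) (P x) := fun j =>
    (integrable_exp_pair_s12 S hx hv (by positivity)).sub (integrable_exp_pair_s12 S hx hv (hpos j))
  have hae := fun j : ℕ => S.affine x hx (j * h) h (hpos j) hh v (mem_Uset_of_mem_UsetLe hv)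
  have hint2 : ∀ j : ℕ, Integrable
      (fun ω => Complex.exp (φ h v + pair (ψ h v) (X (j * h) ω))) (P x) := fun j =>
    integrable_condExp.congr (hae j)
  have hstep : ∀ j : ℕ, ∫ ω in stay X x r (j * h), (Complex.exp (pair v (X (h + j * h) ω))
      - Complex.exp (pair v (X (j * h) ω))) ∂(P x)
      = ∫ ω in stay X x r (j * h), (Complex.exp (φ h v + pair (ψ h v) (X (j * h) ω))
      - Complex.exp (pair v (X (j * h) ω))) ∂(P x) := by
    intro j
    have i1 := integrable_exp_pair_s12 S hx hv (t := h + j * h) (by positivity)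
    have i2 := integrable_exp_pair_s12 S hx hv (hpos j)
    rw [integral_sub i1.integrableOn i2.integrableOn,
      integral_sub (hint2 j).integrableOn i2.integrableOn,
      ← setIntegral_condExp (ℱ.le (j * h)) i1 (measurableSet_stay S (hpos j)),
      integral_congr_ae (ae_restrict_of_ae (hae j))]
  have h1 : ∫ ω, Complex.exp (pair v (X (kap X x r h n ω * h) ω)) ∂(P x)
      = Complex.exp (pair v x) + ∑ j ∈ Finset.range n,
        ∫ ω in stay X x r (j * h), (Complex.exp (φ h v + pair (ψ h v) (X (j * h) ω))
      - Complex.exp (pair v (X (j * h) ω))) ∂(P x) := by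
    simp only [telescope hh fun t ω => Complex.exp (pair v (X t ω))]
    rw [integral_add (integrable_exp_pair_s12 S hx hv le_rfl)
      (integrable_finsetSum _ fun j _ => (hint j).indicator (hG j)),
      integral_finsetSum _ fun j _ => (hint j).indicator (hG j)]
    congr 1
    · rw [integral_congr_ae (g := fun _ => Complex.exp (pair v x))
        ((ae_start S hx).mono fun ω hω => by simp [hω])]
      simp
    · refine Finset.sum_congr rfl fun j _ => ?_
      rw [integral_indicator (hG j), hstep j]
  have h2 : ∫ ω, a * (kap X x r h n ω : ℝ) ∂(P x)
      = ∑ j ∈ Finset.range n, a * (P x).real (stay X x r (j * h)) := by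
    simp only [kap_eq_sum]
    rw [integral_const_mul, integral_finsetSum _
      fun j _ => (integrable_const (1 : ℝ)).indicator (hG j), Finset.mul_sum]
    refine Finset.sum_congr rfl fun j _ => ?_
    rw [integral_indicator (hG j)]
    simp
  rw [h1, h2, add_sub_cancel_left, Complex.ofReal_sum, Finset.mul_sum, Finset.mul_sum,
    ← Finset.sum_sub_distrib]
  refine norm_sum_le_of_le _ fun j _ => ?_
  have h3 : ∫ ω in stay X x r (j * h), (Complex.exp (φ h v + pair (ψ h v) (X (j * h) ω))
      - Complex.exp (pair v (X (j * h) ω)) - a * c) ∂(P x)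
      = ∫ ω in stay X x r (j * h), (Complex.exp (φ h v + pair (ψ h v) (X (j * h) ω))
      - Complex.exp (pair v (X (j * h) ω))) ∂(P x)
        - c * ((a * (P x).real (stay X x r (j * h)) : ℝ) : ℂ) := by
    have i3 : Integrable (fun ω => Complex.exp (φ h v + pair (ψ h v) (X (j * h) ω))
      - Complex.exp (pair v (X (j * h) ω))) (P x) :=
      (hint2 j).sub (integrable_exp_pair_s12 S hx hv (hpos j))
    rw [integral_sub i3.integrableOn (integrable_const _)]
    simp
    ring
  rw [← h3]
  refine (norm_setIntegral_le_of_norm_le_const (C := δ * a) (measure_lt_top _ _)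
    fun ω hω => ?_).trans_eq (by ring)
  exact hb _ (hω _ (hpos j) le_rfl)

/-- The estimate of `dynkin_estimate` survives the limit along a sequence of meshes. -/
lemma dynkin_limit (S : AffineSetup D ℱ P X φ ψ) (hx : x ∈ D) {m : ℝ}
    {u : EuclideanSpace ℂ (Fin d)} {v : ℕ → EuclideanSpace ℂ (Fin d)} {h a : ℕ → ℝ} {n : ℕ → ℕ}
    (hv : ∀ᶠ k in atTop, v k ∈ UsetLe d D m) (hvu : Tendsto v atTop (𝓝 u))
    (hh : ∀ᶠ k in atTop, 0 < h k) {r δ B : ℝ} {c : ℂ}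
    {Y : Ω → EuclideanSpace ℝ (Fin d)} {Θ : Ω → ℝ}
    (hY : ∀ᵐ ω ∂(P x), Tendsto (fun k => X (kap X x r (h k) (n k) ω * h k) ω) atTop (𝓝 (Y ω)))
    (hΘ : ∀ᵐ ω ∂(P x), Tendsto (fun k => a k * (kap X x r (h k) (n k) ω : ℝ)) atTop (𝓝 (Θ ω)))
    (hB : ∀ᶠ k in atTop, ∀ ω, |a k * (kap X x r (h k) (n k) ω : ℝ)| ≤ B)
    (hb : ∀ᶠ k in atTop, ∀ y ∈ Metric.closedBall x r,
      ‖Complex.exp (φ (h k) (v k) + pair (ψ (h k) (v k)) y) - Complex.exp (pair (v k) y)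
        - a k * c‖ ≤ δ * a k) :
    ‖∫ ω, Complex.exp (pair u (Y ω)) ∂(P x) - Complex.exp (pair u x)
        - c * ((∫ ω, Θ ω ∂(P x) : ℝ) : ℂ)‖ ≤ δ * ∫ ω, Θ ω ∂(P x) := by
  have := S.prob x hx
  have l1 : Tendsto (fun k => ∫ ω, Complex.exp (pair (v k) (X (kap X x r (h k) (n k) ω * h k) ω))
      ∂(P x)) atTop (𝓝 (∫ ω, Complex.exp (pair u (Y ω)) ∂(P x))) := by
    refine tendsto_integral_filter_of_dominated_convergence (fun _ => Real.exp m) ?_ ?_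
      (integrable_const _) ?_
    · filter_upwards [hh] with k hk using (measurable_exp_kap S hk.le).aestronglyMeasurable
    · filter_upwards [hh, hv] with k hk hvk
      refine Eventually.of_forall fun ω => norm_exp_pair_le hvk (S.mem _ ?_ ω)
      exact mul_nonneg (Nat.cast_nonneg _) hk.le
    · filter_upwards [hY] with ω hω
      exact tendsto_exp_pair hvu hω
  have l2 : Tendsto (fun k => ∫ ω, a k * (kap X x r (h k) (n k) ω : ℝ) ∂(P x)) atTop
      (𝓝 (∫ ω, Θ ω ∂(P x))) := by
    refine tendsto_integral_filter_of_dominated_convergence (fun _ => B) ?_ ?_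
      (integrable_const _) hΘ
    · filter_upwards [hh] with k hk
      exact ((measurable_kap S hk.le).const_mul _).aestronglyMeasurable
    · filter_upwards [hB] with k hk using Eventually.of_forall hk
  have l3 : Tendsto (fun k => Complex.exp (pair (v k) x)) atTop (𝓝 (Complex.exp (pair u x))) :=
    tendsto_exp_pair hvu tendsto_const_nhds
  have l2' := (Complex.continuous_ofReal.tendsto _).comp l2
  refine le_of_tendsto_of_tendsto ((l1.sub l3).sub (l2'.const_mul c)).norm (l2.const_mul δ) ?_
  filter_upwards [hh, hv, hb] with k h1 h2 h3
  exact dynkin_estimate S hx h2 h1.le (n k) h3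

lemma exists_stay (S : AffineSetup D ℱ P X φ ψ) {r : ℝ} (hr : 0 < r) {ω : Ω}
    (hω : X 0 ω = x) : ∃ ε > 0, ω ∈ stay X x r ε := by
  have hev : ∀ᶠ t in 𝓝[≥] (0 : ℝ), X t ω ∈ Metric.closedBall x r := by
    have := S.rightcont ω 0 le_rfl
    exact this.eventually (by
      simp only [hω]
      exact Metric.closedBall_mem_nhds x hr)
  obtain ⟨b, hb, hbb⟩ := mem_nhdsGE_iff_exists_Icc_subset.1 hev
  exact ⟨b, hb, fun s h0 h1 => hbb ⟨h0, h1⟩⟩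

/-- The time up to which `X` stays in the ball, capped at `1`. -/
def exitTime {d : ℕ} {Ω : Type*} (X : ℝ → Ω → EuclideanSpace ℝ (Fin d))
    (x : EuclideanSpace ℝ (Fin d)) (r : ℝ) (ω : Ω) : ℝ :=
  sSup {s : ℝ | 0 ≤ s ∧ s ≤ 1 ∧ ω ∈ stay X x r s}

lemma le_exitTime {r s : ℝ} {ω : Ω} (h0 : 0 ≤ s) (h1 : s ≤ 1) (hs : ω ∈ stay X x r s) :
    s ≤ exitTime X x r ω :=
  le_csSup ⟨1, fun _ ht => ht.2.1⟩ ⟨h0, h1, hs⟩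

lemma exitTime_nonneg {r : ℝ} {ω : Ω} : 0 ≤ exitTime X x r ω :=
  Real.sSup_nonneg fun _ h => h.1

lemma exitTime_le_one {r : ℝ} {ω : Ω} : exitTime X x r ω ≤ 1 :=
  Real.sSup_le (fun _ h => h.2.1) zero_le_one

lemma exitTime_le_kap {r h : ℝ} (hh : 0 < h) {ω : Ω} :
    exitTime X x r ω ≤ kap X x r h ⌈1 / h⌉₊ ω * h := by
  refine Real.sSup_le (fun s hs => ?_) (by positivity)
  obtain ⟨-, h1, hs⟩ := hs
  have hn : 1 ≤ (⌈1 / h⌉₊ : ℝ) * h := by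
    have := Nat.le_ceil (1 / h)
    rwa [div_le_iff₀ hh] at this
  by_contra! hlt
  have hk : kap X x r h ⌈1 / h⌉₊ ω < ⌈1 / h⌉₊ := by
    by_contra! hge
    have : (⌈1 / h⌉₊ : ℝ) ≤ kap X x r h ⌈1 / h⌉₊ ω := by exact_mod_cast hge
    nlinarith
  exact lt_irrefl _ ((stay_iff_lt_kap hh.le hk).1 (stay_anti hlt.le hs))

lemma kap_le_exitTime {r h : ℝ} (hh : 0 < h) {ω : Ω} :
    kap X x r h ⌈1 / h⌉₊ ω * h ≤ exitTime X x r ω + h := by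
  have hk := kap_le (X := X) (x := x) (r := r) (h := h) (n := ⌈1 / h⌉₊) (ω := ω)
  have hst := fun j hj => stay_iff_lt_kap (X := X) (x := x) (r := r) (n := ⌈1 / h⌉₊) (ω := ω)
    (j := j) hh.le hj
  rcases hκ : kap X x r h ⌈1 / h⌉₊ ω with _ | j
  · have := exitTime_nonneg (X := X) (x := x) (r := r) (ω := ω)
    simp only [Nat.cast_zero, zero_mul]
    linarith
  · rw [hκ] at hk hst
    have hj1 : (j : ℝ) * h ≤ 1 := by
      have : (j : ℝ) < 1 / h := Nat.lt_ceil.1 hk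
      rw [lt_div_iff₀ hh] at this
      exact this.le
    have := le_exitTime (by positivity) hj1 ((hst j hk).2 (Nat.lt_succ_self j))
    push_cast
    linarith

/-- The grid exit times decrease to the exit time up to the mesh, so right continuity of the
paths gives convergence of the stopped values. -/
lemma tendsto_kap (S : AffineSetup D ℱ P X φ ψ) {r : ℝ} {h : ℕ → ℝ}
    (hh : ∀ᶠ k in atTop, 0 < h k) (h0 : Tendsto h atTop (𝓝 0)) (ω : Ω) :
    Tendsto (fun k => kap X x r (h k) ⌈1 / h k⌉₊ ω * h k) atTop (𝓝 (exitTime X x r ω)) ∧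
    Tendsto (fun k => X (kap X x r (h k) ⌈1 / h k⌉₊ ω * h k) ω) atTop
      (𝓝 (X (exitTime X x r ω) ω)) := by
  have t1 : Tendsto (fun k => kap X x r (h k) ⌈1 / h k⌉₊ ω * h k) atTop
      (𝓝 (exitTime X x r ω)) := by
    refine tendsto_of_tendsto_of_tendsto_of_le_of_le' tendsto_const_nhds
      (by simpa using h0.const_add (exitTime X x r ω)) ?_ ?_
    · filter_upwards [hh] with k hk using exitTime_le_kap hk
    · filter_upwards [hh] with k hk using kap_le_exitTime hk
  refine ⟨t1, ?_⟩
  refine (S.rightcont ω _ exitTime_nonneg).tendsto.comp (tendsto_nhdsWithin_iff.2 ⟨t1, ?_⟩)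
  filter_upwards [hh] with k hk using exitTime_le_kap hk

/-! ### One-step increments of `(φ, ψ)` -/

/-- The increment `(φ(h,v) - φ(0,v), ψ(h,v) - ψ(0,v)) = (φ(h,v), ψ(h,v) - v)`. -/
def incr {d : ℕ} (φ : ℝ → EuclideanSpace ℂ (Fin d) → ℂ)
    (ψ : ℝ → EuclideanSpace ℂ (Fin d) → EuclideanSpace ℂ (Fin d))
    (p : ℝ × EuclideanSpace ℂ (Fin d)) : ℂ × EuclideanSpace ℂ (Fin d) :=
  (φ p.1 p.2, ψ p.1 p.2 - p.2)

/-- If the increments, rescaled by `a → 0`, converge, then so do the one-step drifts, uniformly on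
small balls. -/
lemma drift_close {v : ℕ → EuclideanSpace ℂ (Fin d)} {h a : ℕ → ℝ}
    {u : EuclideanSpace ℂ (Fin d)} {w : ℂ × EuclideanSpace ℂ (Fin d)}
    (hvu : Tendsto v atTop (𝓝 u)) (ha : ∀ᶠ k in atTop, 0 < a k) (ha0 : Tendsto a atTop (𝓝 0))
    (hw : Tendsto (fun k => (a k : ℂ)⁻¹ • incr φ ψ (h k, v k)) atTop (𝓝 w)) {δ : ℝ} (hδ : 0 < δ) :
    ∃ r₀ > 0, ∀ r ≤ r₀, ∀ᶠ k in atTop, ∀ y ∈ Metric.closedBall x r,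
      ‖Complex.exp (φ (h k) (v k) + pair (ψ (h k) (v k)) y) - Complex.exp (pair (v k) y)
        - a k * (Complex.exp (pair u x) * (w.1 + pair w.2 x))‖ ≤ δ * a k := by
  have tf : Tendsto (fun p : ℕ × EuclideanSpace ℝ (Fin d) => p.1) (atTop ×ˢ 𝓝 x) atTop :=
    tendsto_fst
  have ts : Tendsto (fun p : ℕ × EuclideanSpace ℝ (Fin d) => p.2) (atTop ×ˢ 𝓝 x) (𝓝 x) :=
    tendsto_snd
  have t1 : Tendsto (fun p : ℕ × EuclideanSpace ℝ (Fin d) => Complex.exp (pair (v p.1) p.2))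
      (atTop ×ˢ 𝓝 x) (𝓝 (Complex.exp (pair u x))) :=
    tendsto_exp_pair (hvu.comp tf) ts
  have hw' := hw.comp tf
  have t2 : Tendsto (fun p : ℕ × EuclideanSpace ℝ (Fin d) =>
      ((a p.1 : ℂ)⁻¹ • incr φ ψ (h p.1, v p.1)).1
        + pair ((a p.1 : ℂ)⁻¹ • incr φ ψ (h p.1, v p.1)).2 p.2)
      (atTop ×ˢ 𝓝 x) (𝓝 (w.1 + pair w.2 x)) :=
    hw'.fst_nhds.add (tendsto_pair hw'.snd_nhds ts)
  have t3 : Tendsto (fun p : ℕ × EuclideanSpace ℝ (Fin d) => (a p.1 : ℂ))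
      (atTop ×ˢ 𝓝 x) (𝓝 0) :=
    (Complex.continuous_ofReal.tendsto' 0 0 Complex.ofReal_zero).comp (ha0.comp tf)
  -- `dslope Complex.exp 0 z` is `(exp z - 1) / z`, extended continuously by `1` to `z = 0`.
  have cd : Tendsto (dslope Complex.exp 0) (𝓝 0) (𝓝 1) := by
    have : ContinuousAt (dslope Complex.exp 0) 0 :=
      continuousAt_dslope_same.2 Complex.differentiable_exp.differentiableAt
    simpa [ContinuousAt, dslope_same] using this
  have t4 := t3.mul t2
  rw [zero_mul] at t4
  have t5 := t1.mul (t2.mul (cd.comp t4))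
  rw [mul_one] at t5
  have hev := (t5.eventually (Metric.closedBall_mem_nhds _ hδ))
  obtain ⟨pa, hpa, pb, hpb, hab⟩ := eventually_prod_iff.1 hev
  obtain ⟨r₀, hr₀, hball⟩ := Metric.nhds_basis_closedBall.eventually_iff.1 hpb
  refine ⟨r₀, hr₀, fun r hr => ?_⟩
  filter_upwards [hpa, ha] with k hk hak y hy
  have hab' := hab hk (hball (Metric.closedBall_subset_closedBall hr hy))
  have hak' : (a k : ℂ) ≠ 0 := by exact_mod_cast hak.ne'
  rw [dist_eq_norm] at hab'
  set z := φ (h k) (v k) + pair (ψ (h k) (v k) - v k) y with hz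
  have e1 : ((a k : ℂ)⁻¹ • incr φ ψ (h k, v k)).1
        + pair ((a k : ℂ)⁻¹ • incr φ ψ (h k, v k)).2 y = (a k : ℂ)⁻¹ * z := by
    simp only [incr, Prod.smul_fst, Prod.smul_snd, smul_eq_mul, pair_smul_left, hz]
    ring
  have e2 : Complex.exp (φ (h k) (v k) + pair (ψ (h k) (v k)) y) - Complex.exp (pair (v k) y)
      = Complex.exp (pair (v k) y) * (z * dslope Complex.exp 0 z) := by
    have e3 := sub_smul_dslope Complex.exp 0 z
    rw [sub_zero, smul_eq_mul, Complex.exp_zero] at e3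
    rw [e3, mul_sub, ← Complex.exp_add, mul_one, hz, pair_sub_left]
    congr 2
    ring
  simp only [Function.comp_apply, e1, mul_inv_cancel_left₀ hak'] at hab'
  rw [e2]
  calc _ = ‖(a k : ℂ) * (Complex.exp (pair (v k) y) * ((a k : ℂ)⁻¹ * z * dslope Complex.exp 0 z)
        - Complex.exp (pair u x) * (w.1 + pair w.2 x))‖ := by
        congr 1
        field_simp
    _ ≤ δ * a k := by
        rw [norm_mul, Complex.norm_real, Real.norm_of_nonneg hak.le, mul_comm]
        gcongr

/-! ### Convergence of the difference quotients -/

lemma tendsto_incr (S : AffineSetup D ℱ P X φ ψ) {m : ℕ} {u : EuclideanSpace ℂ (Fin d)}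
    (hu : u ∈ UsetLe d D m) :
    Tendsto (incr φ ψ) (𝓝[>] 0 ×ˢ 𝓝[UsetLe d D m] u) (𝓝 0) := by
  have hle : (𝓝[>] (0 : ℝ) ×ˢ 𝓝[UsetLe d D m] u) ≤ 𝓝[Set.Ici (0:ℝ) ×ˢ UsetLe d D m] (0, u) := by
    rw [nhdsWithin_prod_eq]
    exact prod_mono (nhdsWithin_mono _ Set.Ioi_subset_Ici_self) le_rfl
  have hmem : ((0 : ℝ), u) ∈ Set.Ici (0:ℝ) ×ˢ UsetLe d D m := ⟨Set.self_mem_Ici, hu⟩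
  have h1 := ((S.phi_cont m) _ hmem).tendsto.mono_left hle
  have h2 := ((S.psi_cont m) _ hmem).tendsto.mono_left hle
  have h3 : Tendsto (fun p : ℝ × EuclideanSpace ℂ (Fin d) => p.2)
      (𝓝[>] (0 : ℝ) ×ˢ 𝓝[UsetLe d D m] u) (𝓝 u) := tendsto_snd.mono_right nhdsWithin_le_nhds
  simp only [S.phi_zero u (mem_Uset_of_mem_UsetLe hu)] at h1
  simp only [S.psi_zero u (mem_Uset_of_mem_UsetLe hu)] at h2
  have h4 := h2.sub h3
  rw [sub_self] at h4
  exact h1.prodMk_nhds h4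

/-- The increments are of order `h`. Otherwise the sum of the first `1 / ‖incr‖` drifts, which
covers a time interval shrinking to `0`, would have a nonzero limit. -/
lemma no_blowup (S : AffineSetup D ℱ P X φ ψ) (hspan : affineSpan ℝ D = ⊤) {m : ℕ}
    {u : EuclideanSpace ℂ (Fin d)} (hu : u ∈ UsetLe d D m)
    {p : ℕ → ℝ × EuclideanSpace ℂ (Fin d)}
    (hp : Tendsto p atTop (𝓝[>] 0 ×ˢ 𝓝[UsetLe d D m] u))
    (hbl : Tendsto (fun k => ‖((p k).1 : ℂ)⁻¹ • incr φ ψ (p k)‖) atTop atTop) : False := by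
  have hp1 : Tendsto (fun k => (p k).1) atTop (𝓝[>] 0) := tendsto_fst.comp hp
  have hp2 : Tendsto (fun k => (p k).2) atTop (𝓝[UsetLe d D m] u) := tendsto_snd.comp hp
  -- normalized increments accumulate on the unit sphere
  have hsph : ∃ᶠ k in atTop, ((‖incr φ ψ (p k)‖ : ℝ) : ℂ)⁻¹ • incr φ ψ (p k)
      ∈ Metric.sphere (0 : ℂ × EuclideanSpace ℂ (Fin d)) 1 := by
    refine Eventually.frequently ?_
    filter_upwards [hbl.eventually_gt_atTop 0] with k hk
    have hne : ‖incr φ ψ (p k)‖ ≠ 0 := by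
      intro h0
      rw [norm_smul, h0, mul_zero] at hk
      exact lt_irrefl _ hk
    rw [mem_sphere_zero_iff_norm, norm_smul, norm_inv, Complex.norm_real, norm_norm,
      inv_mul_cancel₀ hne]
  obtain ⟨w, hw, s, hs, hlim⟩ := (isCompact_sphere (0 : ℂ × EuclideanSpace ℂ (Fin d)) 1
    ).tendsto_subseq' hsph
  set a : ℕ → ℝ := fun k => ‖incr φ ψ (p (s k))‖ with ha_def
  set h : ℕ → ℝ := fun k => (p (s k)).1 with hh_def
  set v : ℕ → EuclideanSpace ℂ (Fin d) := fun k => (p (s k)).2 with hv_def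
  have hst := hs.tendsto_atTop
  have hh0 := tendsto_nhdsWithin_iff.1 (hp1.comp hst)
  have hhpos : ∀ᶠ k in atTop, 0 < h k := hh0.2
  have hv0 := tendsto_nhdsWithin_iff.1 (hp2.comp hst)
  have ha0 : Tendsto a atTop (𝓝 0) := by
    have := ((tendsto_incr S hu).comp (hp.comp hst)).norm
    rwa [norm_zero] at this
  have hbl' : Tendsto (fun k => a k / h k) atTop atTop := by
    refine (hbl.comp hst).congr' ?_
    filter_upwards [hhpos] with k hk
    simp only [Function.comp_apply, norm_smul, norm_inv, Complex.norm_real]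
    rw [Real.norm_of_nonneg hk.le, div_eq_inv_mul]
  have hapos : ∀ᶠ k in atTop, 0 < a k := by
    filter_upwards [hbl'.eventually_gt_atTop 0, hhpos] with k h1 h2
    exact (div_pos_iff_of_pos_right h2).1 h1
  -- the number of steps
  set n : ℕ → ℕ := fun k => ⌈1 / a k⌉₊ with hn_def
  have hn1 : ∀ᶠ k in atTop, 1 ≤ a k * n k ∧ a k * n k ≤ 1 + a k := by
    filter_upwards [hapos] with k hk
    have h1 := Nat.le_ceil (1 / a k)
    have h2 := (Nat.ceil_lt_add_one (one_div_pos.2 hk).le).le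
    constructor
    · rw [div_le_iff₀ hk] at h1
      linarith
    · calc a k * n k ≤ a k * (1 / a k + 1) := by gcongr
        _ = 1 + a k := by field_simp
  have hn2 : Tendsto (fun k => a k * n k) atTop (𝓝 1) := by
    refine tendsto_of_tendsto_of_tendsto_of_le_of_le' tendsto_const_nhds
      (by simpa using ha0.const_add 1) ?_ ?_
    · filter_upwards [hn1] with k hk using hk.1
    · filter_upwards [hn1] with k hk using hk.2
  have hn3 : Tendsto (fun k => n k * h k) atTop (𝓝 0) := by
    have := hn2.mul hbl'.inv_tendsto_atTop
    rw [mul_zero] at this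
    refine this.congr' ?_
    filter_upwards [hapos, hhpos] with k h1 h2
    simp only [Pi.inv_apply]
    field_simp
  have hsmall : ∀ᶠ k in atTop, a k ≤ 1 := ha0.eventually_le_const one_pos
  have hzero : ∀ x ∈ D, w.1 + pair w.2 x = 0 := by
    intro x hx
    have := S.prob x hx
    suffices hc : ‖Complex.exp (pair u x) * (w.1 + pair w.2 x)‖ ≤ 0 by
      have := norm_le_zero_iff.1 hc
      exact (mul_eq_zero.1 this).resolve_left (Complex.exp_ne_zero _)
    refine le_of_forall_pos_le_add fun δ hδ => ?_
    rw [zero_add]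
    obtain ⟨r, hr, hclose⟩ := drift_close (x := x) hv0.1 hapos ha0 hlim hδ
    -- on every path the ball is not left before time `n k * h k`, for large `k`
    have hkap : ∀ᵐ ω ∂(P x), ∀ᶠ k in atTop, kap X x r (h k) (n k) ω = n k := by
      filter_upwards [ae_start S hx] with ω hω
      obtain ⟨ε, hε, hstay⟩ := exists_stay S hr hω
      filter_upwards [hn3.eventually_le_const hε, hhpos] with k hk hk'
      by_contra hne
      have hlt := lt_of_le_of_ne (kap_le (X := X) (x := x) (r := r)) hne
      refine lt_irrefl _ ((stay_iff_lt_kap hk'.le hlt).1 (stay_anti ?_ hstay))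
      refine le_trans ?_ hk
      have : (kap X x r (h k) (n k) ω : ℝ) ≤ n k := by exact_mod_cast hlt.le
      gcongr
    have key := dynkin_limit S hx (Y := fun _ => x) (Θ := fun _ => 1) (B := 2) (n := n)
      hv0.2 hv0.1 hhpos ?_ ?_ ?_ (hclose r le_rfl)
    · simpa using key
    · filter_upwards [ae_start S hx, hkap] with ω hω hkω
      have h1 : Tendsto (fun t => X t ω) (𝓝[≥] 0) (𝓝 (X 0 ω)) := S.rightcont ω 0 le_rfl
      rw [hω] at h1
      refine h1.comp (tendsto_nhdsWithin_iff.2 ⟨?_, ?_⟩)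
      · refine hn3.congr' ?_
        filter_upwards [hkω] with k hk
        rw [hk]
      · filter_upwards [hhpos] with k hk
        exact mul_nonneg (Nat.cast_nonneg _) hk.le
    · filter_upwards [hkap] with ω hkω
      refine hn2.congr' ?_
      filter_upwards [hkω] with k hk
      rw [hk]
    · filter_upwards [hn1, hsmall, hapos] with k h1 h2 h3 ω
      have : (kap X x r (h k) (n k) ω : ℝ) ≤ n k :=
        Nat.cast_le.2 (kap_le (X := X) (x := x) (r := r) (h := h k) (n := n k) (ω := ω))
      rw [abs_of_nonneg (mul_nonneg h3.le (Nat.cast_nonneg _))]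
      calc a k * (kap X x r (h k) (n k) ω : ℝ) ≤ a k * n k := by gcongr
        _ ≤ 2 := by linarith [h1.2]
  have hw0 : w = 0 := Prod.ext (eq_zero_of_affine hspan hzero).1 (eq_zero_of_affine hspan hzero).2
  rw [mem_sphere_zero_iff_norm, hw0, norm_zero] at hw
  exact zero_ne_one hw

/-- The stopped Dynkin formula for a limit `w` of difference quotients. The expectation on the left
depends on neither `w` nor the sequence `p`, which is why `w` is unique. -/
lemma dynkin_quotient (S : AffineSetup D ℱ P X φ ψ) {m : ℕ} {u : EuclideanSpace ℂ (Fin d)}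
    {p : ℕ → ℝ × EuclideanSpace ℂ (Fin d)}
    (hp : Tendsto p atTop (𝓝[>] 0 ×ˢ 𝓝[UsetLe d D m] u))
    {w : ℂ × EuclideanSpace ℂ (Fin d)}
    (hw : Tendsto (fun k => ((p k).1 : ℂ)⁻¹ • incr φ ψ (p k)) atTop (𝓝 w))
    (hx : x ∈ D) {δ : ℝ} (hδ : 0 < δ) :
    ∃ r₀ > 0, ∀ r ≤ r₀,
      ‖∫ ω, Complex.exp (pair u (X (exitTime X x r ω) ω)) ∂(P x) - Complex.exp (pair u x)
        - (Complex.exp (pair u x) * (w.1 + pair w.2 x))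
          * ((∫ ω, exitTime X x r ω ∂(P x) : ℝ) : ℂ)‖
      ≤ δ * ∫ ω, exitTime X x r ω ∂(P x) := by
  have hp1 := tendsto_nhdsWithin_iff.1 (tendsto_fst.comp hp)
  have hp2 := tendsto_nhdsWithin_iff.1 (tendsto_snd.comp hp)
  have hpos : ∀ᶠ k in atTop, 0 < (p k).1 := hp1.2
  have hsmall : ∀ᶠ k in atTop, (p k).1 ≤ 1 := hp1.1.eventually_le_const one_pos
  obtain ⟨r₀, hr₀, hclose⟩ := drift_close (x := x) hp2.1 hpos hp1.1 hw hδ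
  refine ⟨r₀, hr₀, fun r hr => ?_⟩
  refine dynkin_limit S hx (n := fun k => ⌈1 / (p k).1⌉₊) (B := 2) (a := fun k => (p k).1)
    hp2.2 hp2.1 hpos ?_ ?_ ?_ (hclose r hr)
  · exact Eventually.of_forall fun ω => (tendsto_kap S hpos hp1.1 ω).2
  · refine Eventually.of_forall fun ω => ?_
    simpa only [mul_comm] using (tendsto_kap (x := x) (r := r) S hpos hp1.1 ω).1
  · filter_upwards [hpos, hsmall] with k h1 h2 ω
    rw [abs_of_nonneg (mul_nonneg h1.le (Nat.cast_nonneg _)), mul_comm]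
    have h3 := kap_le_exitTime (X := X) (x := x) (r := r) (ω := ω) h1
    have h4 := exitTime_le_one (X := X) (x := x) (r := r) (ω := ω)
    linarith

lemma integral_exitTime_pos (S : AffineSetup D ℱ P X φ ψ) (hx : x ∈ D) {r : ℝ} (hr : 0 < r) :
    0 < ∫ ω, exitTime X x r ω ∂(P x) := by
  have := S.prob x hx
  have hmeas : Measurable (exitTime X x r) := by
    have hh : ∀ k : ℕ, 0 < (1 : ℝ) / ((k : ℝ) + 1) := fun k => by positivity
    refine measurable_of_tendsto_metrizable
      (f := fun (k : ℕ) ω => kap X x r (1 / ((k : ℝ) + 1)) ⌈1 / (1 / ((k : ℝ) + 1))⌉₊ ω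
        * (1 / ((k : ℝ) + 1))) (fun k => (measurable_kap S (hh k).le).mul_const _) ?_
    exact tendsto_pi_nhds.2 fun ω => (tendsto_kap S (Eventually.of_forall hh)
      tendsto_one_div_add_atTop_nhds_zero_nat ω).1
  have hint : Integrable (exitTime X x r) (P x) :=
    Integrable.of_bound hmeas.aestronglyMeasurable 1 (Eventually.of_forall fun ω => by
      rw [Real.norm_of_nonneg exitTime_nonneg]; exact exitTime_le_one)
  refine lt_of_le_of_ne (integral_nonneg fun ω => exitTime_nonneg) fun h0 => ?_
  have hz := (integral_eq_zero_iff_of_nonneg (fun ω => exitTime_nonneg) hint).1 h0.symm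
  have hF : ∀ᵐ _ω ∂(P x), False := by
    filter_upwards [hz, ae_start S hx] with ω h1 h2
    obtain ⟨ε, hε, hst⟩ := exists_stay S hr h2
    have h3 : min ε 1 ≤ exitTime X x r ω :=
      le_exitTime (by positivity) (min_le_right _ _) (stay_anti (min_le_left _ _) hst)
    have h4 : 0 < min ε 1 := by positivity
    rw [h1] at h3
    exact absurd h3 (not_le.2 h4)
  exact hF.exists.elim fun _ h => h

lemma quotient_limit_unique (S : AffineSetup D ℱ P X φ ψ) (hspan : affineSpan ℝ D = ⊤) {m : ℕ}
    {u : EuclideanSpace ℂ (Fin d)} {p p' : ℕ → ℝ × EuclideanSpace ℂ (Fin d)}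
    (hp : Tendsto p atTop (𝓝[>] 0 ×ˢ 𝓝[UsetLe d D m] u))
    (hp' : Tendsto p' atTop (𝓝[>] 0 ×ˢ 𝓝[UsetLe d D m] u))
    {w w' : ℂ × EuclideanSpace ℂ (Fin d)}
    (hw : Tendsto (fun k => ((p k).1 : ℂ)⁻¹ • incr φ ψ (p k)) atTop (𝓝 w))
    (hw' : Tendsto (fun k => ((p' k).1 : ℂ)⁻¹ • incr φ ψ (p' k)) atTop (𝓝 w')) : w = w' := by
  have hzero : ∀ x ∈ D, (w - w').1 + pair (w - w').2 x = 0 := by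
    intro x hx
    set c := Complex.exp (pair u x) * (w.1 + pair w.2 x) with hc_def
    set c' := Complex.exp (pair u x) * (w'.1 + pair w'.2 x) with hc'_def
    have hcc : c = c' := by
      rw [← sub_eq_zero, ← norm_le_zero_iff]
      refine le_of_forall_pos_le_add fun δ hδ => ?_
      obtain ⟨r₁, hr₁, k₁⟩ := dynkin_quotient S hp hw hx (half_pos hδ)
      obtain ⟨r₂, hr₂, k₂⟩ := dynkin_quotient S hp' hw' hx (half_pos hδ)
      have hr : 0 < min r₁ r₂ := lt_min hr₁ hr₂
      have e₁ := k₁ _ (min_le_left r₁ r₂)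
      have e₂ := k₂ _ (min_le_right r₁ r₂)
      have hpos := integral_exitTime_pos S hx hr
      set I := ∫ ω, exitTime X x (min r₁ r₂) ω ∂(P x)
      have e₃ : ‖(c - c') * (I : ℂ)‖ ≤ δ * I := by
        refine le_trans (le_of_eq ?_) ((norm_sub_le _ _).trans ((add_le_add e₂ e₁).trans_eq ?_))
        · congr 1
          ring
        · ring
      rw [norm_mul, Complex.norm_real, Real.norm_of_nonneg hpos.le] at e₃
      rw [zero_add]
      exact le_of_mul_le_mul_right e₃ hpos
    have := mul_left_cancel₀ (Complex.exp_ne_zero _) hcc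
    rw [Prod.fst_sub, Prod.snd_sub, pair_sub_left]
    linear_combination this
  exact sub_eq_zero.1
    (Prod.ext (eq_zero_of_affine hspan hzero).1 (eq_zero_of_affine hspan hzero).2)

/-- The difference quotients converge jointly in `(h, v)` as `h ↓ 0` and `v → u` in `𝒰_m`. -/
lemma exists_quotient_limit (S : AffineSetup D ℱ P X φ ψ) (hspan : affineSpan ℝ D = ⊤) {m : ℕ}
    {u : EuclideanSpace ℂ (Fin d)} (hu : u ∈ UsetLe d D m) :
    ∃ w, Tendsto (fun p : ℝ × EuclideanSpace ℂ (Fin d) => (p.1 : ℂ)⁻¹ • incr φ ψ p)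
      (𝓝[>] 0 ×ˢ 𝓝[UsetLe d D m] u) (𝓝 w) := by
  set q : ℝ × EuclideanSpace ℂ (Fin d) → ℂ × EuclideanSpace ℂ (Fin d) :=
    fun p => (p.1 : ℂ)⁻¹ • incr φ ψ p with hq
  set L : Filter (ℝ × EuclideanSpace ℂ (Fin d)) := 𝓝[>] 0 ×ˢ 𝓝[UsetLe d D m] u with hL
  have hne : (𝓝[UsetLe d D m] u).NeBot := mem_closure_iff_nhdsWithin_neBot.1 (subset_closure hu)
  have hbot : L ⊓ comap (fun p => ‖q p‖) atTop = ⊥ := by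
    by_contra hnb
    have : (L ⊓ comap (fun p => ‖q p‖) atTop).NeBot := ⟨hnb⟩
    obtain ⟨p, hp⟩ := exists_seq_tendsto (L ⊓ comap (fun p => ‖q p‖) atTop)
    rw [tendsto_inf, tendsto_comap_iff] at hp
    exact no_blowup S hspan hu hp.1 hp.2
  obtain ⟨M, hM⟩ : ∃ M : ℝ, ∀ᶠ p in L, ‖q p‖ ≤ M := by
    obtain ⟨s, hs, t, ht, hst⟩ := inf_eq_bot_iff.1 hbot
    obtain ⟨t', ht', htt⟩ := ht
    obtain ⟨M, hM⟩ := mem_atTop_sets.1 ht'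
    refine ⟨M, mem_of_superset hs fun p hp => ?_⟩
    by_contra hlt
    have : p ∈ s ∩ t := ⟨hp, htt (hM _ (not_le.1 hlt).le)⟩
    rw [hst] at this
    exact this
  have hsub : ∀ p : ℕ → ℝ × EuclideanSpace ℂ (Fin d), Tendsto p atTop L →
      ∃ w, ∃ s : ℕ → ℕ, StrictMono s ∧ Tendsto (fun k => q (p (s k))) atTop (𝓝 w) := by
    intro p hp
    have hf : ∃ᶠ k in atTop, q (p k) ∈ Metric.closedBall (0 : ℂ × EuclideanSpace ℂ (Fin d)) M := by
      refine Eventually.frequently ?_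
      filter_upwards [hp.eventually hM] with k hk
      rwa [mem_closedBall_zero_iff]
    obtain ⟨w, -, s, hs, hlim⟩ := (isCompact_closedBall
      (0 : ℂ × EuclideanSpace ℂ (Fin d)) M).tendsto_subseq' hf
    exact ⟨w, s, hs, hlim⟩
  obtain ⟨p₀, hp₀⟩ := exists_seq_tendsto L
  obtain ⟨w, s₀, hs₀, hlim₀⟩ := hsub p₀ hp₀
  refine ⟨w, tendsto_of_subseq_tendsto fun p hp => ?_⟩
  obtain ⟨w', s, hs, hlim⟩ := hsub p hp
  have := quotient_limit_unique S hspan (hp.comp hs.tendsto_atTop)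
    (hp₀.comp hs₀.tendsto_atTop) hlim hlim₀
  exact ⟨s, this ▸ hlim⟩

end paths

/-- Theorem 3.8, the main regularity theorem: every conservative affine
process setup (càdlàg `D`-valued adapted process, right-continuous filtration, affine
Markov property with jointly continuous `φ, ψ` normalized at `t = 0`) on a state space
affinely spanning `ℝ^d` is regular: the right derivatives
`F(u) = ∂_t φ(t,u)|_{t=0+}` and `R(u) = ∂_t ψ(t,u)|_{t=0+}` exist for all `u ∈ 𝒰`
and are continuous on each `𝒰_k`. -/
theorem affine_process_regular
    (d : ℕ) (D : Set (EuclideanSpace ℝ (Fin d)))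
    (hDne : D.Nonempty) (hDmeas : MeasurableSet D) (hspan : affineSpan ℝ D = ⊤)
    {Ω : Type*} {mΩ : MeasurableSpace Ω} (ℱ : Filtration ℝ mΩ)
    (hℱright : ∀ t : ℝ, 0 ≤ t → (ℱ t : MeasurableSpace Ω) = ⨅ (s : ℝ) (_ : t < s), ℱ s)
    (P : EuclideanSpace ℝ (Fin d) → Measure Ω)
    (hP : ∀ x ∈ D, IsProbabilityMeasure (P x))
    (X : ℝ → Ω → EuclideanSpace ℝ (Fin d))
    (hadapted : ∀ t : ℝ, 0 ≤ t → StronglyMeasurable[ℱ t] (X t))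
    (hXD : ∀ t : ℝ, 0 ≤ t → ∀ ω, X t ω ∈ D)
    (hstart : ∀ x ∈ D, P x {ω | X 0 ω = x} = 1)
    (hrightcont : ∀ ω, ∀ t : ℝ, 0 ≤ t →
      ContinuousWithinAt (fun s => X s ω) (Set.Ici t) t)
    (hleftlim : ∀ ω, ∀ t : ℝ, 0 < t →
      ∃ lim, Tendsto (fun s => X s ω) (𝓝[<] t) (𝓝 lim))
    (φ : ℝ → EuclideanSpace ℂ (Fin d) → ℂ)
    (ψ : ℝ → EuclideanSpace ℂ (Fin d) → EuclideanSpace ℂ (Fin d))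
    (hψU : ∀ t : ℝ, 0 ≤ t → ∀ u ∈ Uset d D, ψ t u ∈ Uset d D)
    (hφ0 : ∀ u ∈ Uset d D, φ 0 u = 0)
    (hψ0 : ∀ u ∈ Uset d D, ψ 0 u = u)
    (hφcont : ∀ k : ℕ, ContinuousOn (fun p : ℝ × EuclideanSpace ℂ (Fin d) => φ p.1 p.2)
      (Set.Ici (0:ℝ) ×ˢ UsetLe d D k))
    (hψcont : ∀ k : ℕ, ContinuousOn (fun p : ℝ × EuclideanSpace ℂ (Fin d) => ψ p.1 p.2)
      (Set.Ici (0:ℝ) ×ˢ UsetLe d D k))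
    (haffine : ∀ x ∈ D, ∀ s t : ℝ, 0 ≤ s → 0 ≤ t → ∀ u ∈ Uset d D,
      (P x)[fun ω => Complex.exp (pair u (X (t + s) ω)) | ℱ s]
        =ᵐ[P x] fun ω => Complex.exp (φ t u + pair (ψ t u) (X s ω))) :
    ∃ (F : EuclideanSpace ℂ (Fin d) → ℂ)
      (R : EuclideanSpace ℂ (Fin d) → EuclideanSpace ℂ (Fin d)),
      (∀ u ∈ Uset d D,
        Tendsto (fun t : ℝ => φ t u / (t : ℂ)) (𝓝[>] 0) (𝓝 (F u)) ∧
        Tendsto (fun t : ℝ => (t : ℂ)⁻¹ • (ψ t u - u)) (𝓝[>] 0) (𝓝 (R u))) ∧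
      (∀ k : ℕ, ContinuousOn F (UsetLe d D k) ∧ ContinuousOn R (UsetLe d D k)) := by
  have S : AffineSetup D ℱ P X φ ψ := ⟨hP, hadapted, hXD, hstart, hrightcont, hφ0, hψ0, hφcont,
    hψcont, haffine⟩
  set q : ℝ × EuclideanSpace ℂ (Fin d) → ℂ × EuclideanSpace ℂ (Fin d) :=
    fun p => (p.1 : ℂ)⁻¹ • incr φ ψ p with hq
  have hpt : ∀ (m : ℕ) (u), u ∈ UsetLe d D m → ∀ w,
      Tendsto q (𝓝[>] 0 ×ˢ 𝓝[UsetLe d D m] u) (𝓝 w) →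
      Tendsto (fun t => q (t, u)) (𝓝[>] 0) (𝓝 w) := by
    intro m u hu w hw
    refine hw.comp (tendsto_id.prodMk (tendsto_nhdsWithin_iff.2 ⟨tendsto_const_nhds, ?_⟩))
    exact Eventually.of_forall fun _ => hu
  have hnat : ∀ u ∈ Uset d D, ∃ m : ℕ, u ∈ UsetLe d D m := by
    rintro u ⟨C, hC⟩
    obtain ⟨m, hm⟩ := exists_nat_ge C
    exact ⟨m, fun x hx => (hC x hx).trans hm⟩
  have hex : ∀ u, ∃ w, u ∈ Uset d D → Tendsto (fun t => q (t, u)) (𝓝[>] 0) (𝓝 w) := by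
    intro u
    by_cases hu : u ∈ Uset d D
    · obtain ⟨m, hm⟩ := hnat u hu
      obtain ⟨w, hw⟩ := exists_quotient_limit S hspan hm
      exact ⟨w, fun _ => hpt m u hm w hw⟩
    · exact ⟨0, fun h => absurd h hu⟩
  choose W hW using hex
  have hWjoint : ∀ (m : ℕ) (u), u ∈ UsetLe d D m →
      Tendsto q (𝓝[>] 0 ×ˢ 𝓝[UsetLe d D m] u) (𝓝 (W u)) := by
    intro m u hu
    obtain ⟨w, hw⟩ := exists_quotient_limit S hspan hu
    have := tendsto_nhds_unique (hpt m u hu w hw) (hW u (mem_Uset_of_mem_UsetLe hu))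
    exact this ▸ hw
  -- a joint limit depends continuously on the parameter
  have hWcont : ∀ k : ℕ, ContinuousOn W (UsetLe d D k) := by
    intro m u hu
    refine Metric.nhds_basis_closedBall.tendsto_right_iff.2 fun ε hε => ?_
    have hev := (hWjoint m u hu).eventually (Metric.closedBall_mem_nhds _ hε)
    obtain ⟨pa, hpa, pb, hpb, hab⟩ := eventually_prod_iff.1 hev
    filter_upwards [hpb, self_mem_nhdsWithin] with v hv hvU
    refine Metric.isClosed_closedBall.mem_of_tendsto (hW v (mem_Uset_of_mem_UsetLe hvU)) ?_
    filter_upwards [hpa] with t ht using hab ht hv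
  refine ⟨fun u => (W u).1, fun u => (W u).2, fun u hu => ⟨?_, ?_⟩, fun k => ⟨?_, ?_⟩⟩
  · refine (hW u hu).fst_nhds.congr fun t => ?_
    simp [hq, incr, div_eq_inv_mul]
  · exact (hW u hu).snd_nhds
  · exact continuous_fst.comp_continuousOn (hWcont k)
  · exact continuous_snd.comp_continuousOn (hWcont k)
end
end
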